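/- Let θ : ℝⁿ → [−∞,+∞] be symmetric, let g = θ∘λ be the associated spectral function, and let X ∈ Sⁿ be such that g is prox-regular at X. Then g is twice differentiable at X if and only if θ is twice differentiable at λ(X). If either holds, then for every H ∈ Sⁿ, ⟨∇²g(X)H, H⟩ = ⟨∇²θ(λ(X))·λ'(X;H), λ'(X;H)⟩ + 2·∑_{m=1}^{r} ⟨Diag(y_{α_m}), U_{α_m}ᵀ·H·(μ_m·I − X)^†·H·U_{α_m}⟩, where y = ∇θ(λ(X)) and U ∈ Oⁿ(X). -/

import Mathlib

open Filter Topology Matrix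

noncomputable section

namespace SpecPaper

/-! ## Generic variational analysis definitions over a topological real vector space -/

variable {E : Type*}

section Generic

variable [AddCommGroup E] [Module ℝ E] [TopologicalSpace E]

/-- `f x` is finite (neither `+∞` nor `-∞`). -/
def IsFiniteAt (f : E → EReal) (x : E) : Prop :=
  f x ≠ ⊤ ∧ f x ≠ ⊥

/-- The norm induced by a given inner product. -/
noncomputable def nrm (ip : E → E → ℝ) (x : E) : ℝ :=
  Real.sqrt (ip x x)

/-- The subderivative `df(x)(w)`. -/
noncomputable def subderiv (f : E → EReal) (x w : E) : EReal :=
  Filter.liminf (fun p : ℝ × E => (((p.1)⁻¹ : ℝ) : EReal) * (f (x + p.1 • p.2) - f x))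
    ((nhdsWithin (0 : ℝ) (Set.Ioi 0)) ×ˢ nhds w)

/-- The second-order difference quotient `Δ²ₜ f(x,v)(w)`. -/
noncomputable def sdq2 (ip : E → E → ℝ) (f : E → EReal) (x v : E) (t : ℝ) (w : E) : EReal :=
  (((2 / t ^ 2) : ℝ) : EReal) * (f (x + t • w) - f x - ((t * ip v w : ℝ) : EReal))

/-- The second subderivative `d²f(x,v)(w)`. -/
noncomputable def subderiv2 (ip : E → E → ℝ) (f : E → EReal) (x v w : E) : EReal :=
  Filter.liminf (fun p : ℝ × E => sdq2 ip f x v p.1 p.2)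
    ((nhdsWithin (0 : ℝ) (Set.Ioi 0)) ×ˢ nhds w)

/-- Twice epi-differentiability of `f` at `x` for `v`. -/
def TwiceEpiDiff (ip : E → E → ℝ) (f : E → EReal) (x v : E) : Prop :=
  IsFiniteAt f x ∧
    ∀ t : ℕ → ℝ, (∀ k, 0 < t k) → Tendsto t atTop (nhds 0) →
      ∀ w : E, ∃ ws : ℕ → E, Tendsto ws atTop (nhds w) ∧
        Tendsto (fun k => sdq2 ip f x v (t k) (ws k)) atTop (nhds (subderiv2 ip f x v w))

/-- `v` is a regular subgradient of `f` at `x`. -/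
def RegSubgrad (ip : E → E → ℝ) (f : E → EReal) (x v : E) : Prop :=
  IsFiniteAt f x ∧
    (0 : EReal) ≤ Filter.liminf
      (fun y : E =>
        (((nrm ip (y - x))⁻¹ : ℝ) : EReal) * (f y - f x - ((ip v (y - x) : ℝ) : EReal)))
      (nhdsWithin x {x}ᶜ)

/-- `v` is a (limiting) subgradient of `f` at `x`. -/
def LimSubgrad (ip : E → E → ℝ) (f : E → EReal) (x v : E) : Prop :=
  ∃ xs vs : ℕ → E, (∀ k, RegSubgrad ip f (xs k) (vs k)) ∧
    Tendsto xs atTop (nhds x) ∧ Tendsto vs atTop (nhds v) ∧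
    Tendsto (fun k => f (xs k)) atTop (nhds (f x))

/-- The tangent cone to `C` at `x`. -/
def tangentCone (C : Set E) (x : E) : Set E :=
  {w | ∃ (t : ℕ → ℝ) (ws : ℕ → E), (∀ k, 0 < t k) ∧ Tendsto t atTop (nhds 0) ∧
    Tendsto ws atTop (nhds w) ∧ ∀ k, x + t k • ws k ∈ C}

/-- The regular normal cone to `C` at `x`. -/
def regNormalCone (ip : E → E → ℝ) (C : Set E) (x : E) : Set E :=
  {v | ∀ w ∈ tangentCone C x, ip v w ≤ 0}

/-- The limiting normal cone to `C` at `x`. -/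
def limNormalCone (ip : E → E → ℝ) (C : Set E) (x : E) : Set E :=
  {v | ∃ xs vs : ℕ → E, (∀ k, xs k ∈ C) ∧ (∀ k, vs k ∈ regNormalCone ip C (xs k)) ∧
    Tendsto xs atTop (nhds x) ∧ Tendsto vs atTop (nhds v)}

/-- The critical cone `C_f(x,v)`. -/
def criticalCone (ip : E → E → ℝ) (f : E → EReal) (x v : E) : Set E :=
  {w | subderiv f x w = ((ip v w : ℝ) : EReal)}

/-- `f` is locally Lipschitz continuous at `x` relative to its domain. -/
def LocLipAtRelDom (ip : E → E → ℝ) (f : E → EReal) (x : E) : Prop :=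
  IsFiniteAt f x ∧
    ∃ V ∈ nhds x, ∃ ℓ : ℝ, 0 ≤ ℓ ∧
      ∀ a ∈ V, ∀ b ∈ V, f a ≠ ⊤ → f b ≠ ⊤ →
        f a ≠ ⊥ ∧ f b ≠ ⊥ ∧ |(f a).toReal - (f b).toReal| ≤ ℓ * nrm ip (a - b)

/-- `f` is locally Lipschitz continuous relative to its domain. -/
def LocLipRelDom (ip : E → E → ℝ) (f : E → EReal) : Prop :=
  ∀ x : E, f x ≠ ⊤ → LocLipAtRelDom ip f x

/-- `v` is a proximal subgradient of `f` at `x`. -/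
def ProxSubgrad (ip : E → E → ℝ) (f : E → EReal) (x v : E) : Prop :=
  IsFiniteAt f x ∧
    ∃ r > (0 : ℝ), ∃ ε > (0 : ℝ), ∀ x' : E, nrm ip (x' - x) ≤ ε →
      f x + ((ip v (x' - x) - r / 2 * ip (x' - x) (x' - x) : ℝ) : EReal) ≤ f x'

/-- `f` is prox-regular at `x` for `v`. -/
def ProxRegularAtFor (ip : E → E → ℝ) (f : E → EReal) (x v : E) : Prop :=
  IsFiniteAt f x ∧
    (∃ δ > (0 : ℝ), LowerSemicontinuousOn f {x' | nrm ip (x' - x) < δ}) ∧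
    ∃ ε > (0 : ℝ), ∃ r : ℝ, 0 ≤ r ∧
      ∀ x₁ v₁ : E, LimSubgrad ip f x₁ v₁ → nrm ip (x₁ - x) < ε → nrm ip (v₁ - v) < ε →
        f x₁ < f x + (ε : EReal) →
        ∀ x' : E, nrm ip (x' - x) < ε →
          f x₁ + ((ip v₁ (x' - x₁) - r / 2 * ip (x' - x₁) (x' - x₁) : ℝ) : EReal) ≤ f x'

/-- `f` is prox-regular at `x` (for every subgradient). -/
def ProxRegularAt (ip : E → E → ℝ) (f : E → EReal) (x : E) : Prop :=
  ∀ v : E, LimSubgrad ip f x v → ProxRegularAtFor ip f x v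

/-- `f` is subdifferentially continuous at `x`. -/
def SubdiffContAt (ip : E → E → ℝ) (f : E → EReal) (x : E) : Prop :=
  ∀ v : E, LimSubgrad ip f x v →
    ∀ xs vs : ℕ → E, (∀ k, LimSubgrad ip f (xs k) (vs k)) →
      Tendsto xs atTop (nhds x) → Tendsto vs atTop (nhds v) →
      Tendsto (fun k => f (xs k)) atTop (nhds (f x))

/-- `f` is prox-bounded. -/
def ProxBounded (ip : E → E → ℝ) (f : E → EReal) : Prop :=
  ∃ α c : ℝ, ∀ x : E, (c : EReal) ≤ f x + ((α * ip x x : ℝ) : EReal)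

/-- The proximal mapping (as a set of minimizers). -/
def proxSet (ip : E → E → ℝ) (f : E → EReal) (γ : ℝ) (x : E) : Set E :=
  {w | ∀ w' : E,
    f w + ((1 / (2 * γ) * ip (w - x) (w - x) : ℝ) : EReal) ≤
      f w' + ((1 / (2 * γ) * ip (w' - x) (w' - x) : ℝ) : EReal)}

/-- The proximal map of `f` with parameter `γ` is single-valued around `z` and the resulting
map is directionally differentiable at `z`. -/
def ProxSingleDirDiff (ip : E → E → ℝ) (f : E → EReal) (γ : ℝ) (z : E) : Prop :=
  ∃ V ∈ nhds z, ∃ P : E → E, (∀ u ∈ V, proxSet ip f γ u = {P u}) ∧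
    ∀ h : E, ∃ L : E,
      Tendsto (fun t : ℝ => t⁻¹ • (P (z + t • h) - P z)) (nhdsWithin 0 (Set.Ioi 0)) (nhds L)

/-- The parabolic difference quotient. -/
noncomputable def parabQuot (f : E → EReal) (x w : E) (t : ℝ) (z : E) : EReal :=
  (((2 / t ^ 2) : ℝ) : EReal) *
    (f (x + t • w + (t ^ 2 / 2) • z) - f x - ((t * (subderiv f x w).toReal : ℝ) : EReal))

/-- The parabolic subderivative `d²f(x)(w | z)`. -/
noncomputable def parabSubderiv (f : E → EReal) (x w z : E) : EReal :=
  Filter.liminf (fun p : ℝ × E => parabQuot f x w p.1 p.2)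
    ((nhdsWithin (0 : ℝ) (Set.Ioi 0)) ×ˢ nhds z)

/-- `f` is parabolically epi-differentiable at `x` for `w`. -/
def ParabEpiDiff (f : E → EReal) (x w : E) : Prop :=
  (∃ z : E, parabSubderiv f x w z < ⊤) ∧
    ∀ t : ℕ → ℝ, (∀ k, 0 < t k) → Tendsto t atTop (nhds 0) →
      ∀ z : E, ∃ zs : ℕ → E, Tendsto zs atTop (nhds z) ∧
        Tendsto (fun k => parabQuot f x w (t k) (zs k)) atTop (nhds (parabSubderiv f x w z))

/-- `φ` is a generalized quadratic form: its domain is a linear subspace and on the domain it is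
given by a symmetric linear operator. -/
def IsGQF (ip : E → E → ℝ) (φ : E → EReal) : Prop :=
  (φ 0 ≠ ⊤) ∧
  (∀ x y : E, φ x ≠ ⊤ → φ y ≠ ⊤ → φ (x + y) ≠ ⊤) ∧
  (∀ (c : ℝ) (x : E), φ x ≠ ⊤ → φ (c • x) ≠ ⊤) ∧
  ∃ L : E → E,
    (∀ x y : E, φ x ≠ ⊤ → φ y ≠ ⊤ → L (x + y) = L x + L y) ∧
    (∀ (c : ℝ) (x : E), φ x ≠ ⊤ → L (c • x) = c • L x) ∧
    (∀ x y : E, φ x ≠ ⊤ → φ y ≠ ⊤ → ip (L x) y = ip x (L y)) ∧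
    (∀ x : E, φ x ≠ ⊤ → φ x = ((ip (L x) x : ℝ) : EReal))

/-- `f` is generalized twice differentiable at `x` for `v`. -/
def GenTwiceDiff (ip : E → E → ℝ) (f : E → EReal) (x v : E) : Prop :=
  TwiceEpiDiff ip f x v ∧ IsGQF ip (subderiv2 ip f x v)

/-- Proto-differentiability of a set-valued map `F` at `x` for `y ∈ F x`. -/
def ProtoDiff (F : E → Set E) (x y : E) : Prop :=
  ∀ w η : E, (w, η) ∈ tangentCone {p : E × E | p.2 ∈ F p.1} (x, y) →
    ∀ t : ℕ → ℝ, (∀ k, 0 < t k) → Tendsto t atTop (nhds 0) →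
      ∃ ws ηs : ℕ → E, Tendsto ws atTop (nhds w) ∧ Tendsto ηs atTop (nhds η) ∧
        ∀ k, y + t k • ηs k ∈ F (x + t k • ws k)

/-- Relative interior of a set (interior relative to its affine hull). -/
def relInterior (C : Set E) : Set E :=
  {y | y ∈ C ∧ ∃ V ∈ nhds y, ∀ z ∈ V, z ∈ affineSpan ℝ C → z ∈ C}

/-- A polyhedral set: the intersection of finitely many closed half-spaces. -/
def IsPolyhedral (ip : E → E → ℝ) (C : Set E) : Prop :=
  ∃ (k : ℕ) (a : Fin k → E) (b : Fin k → ℝ), C = {x | ∀ j : Fin k, ip (a j) x ≤ b j}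

/-- The subdifferential of a convex function. -/
def convexSubdiff (ip : E → E → ℝ) (f : E → EReal) (x : E) : Set E :=
  {v | ∀ z : E, f x + ((ip v (z - x) : ℝ) : EReal) ≤ f z}

/-- The natural inner product on `E × ℝ`. -/
def ipProd (ip : E → E → ℝ) : E × ℝ → E × ℝ → ℝ :=
  fun p q => ip p.1 q.1 + p.2 * q.2

/-- The epigraph of `f`. -/
def epiSet (f : E → EReal) : Set (E × ℝ) :=
  {p | f p.1 ≤ (p.2 : EReal)}

/-- `f` is subdifferentially regular at `x`. -/
def SubdiffRegularAt (ip : E → E → ℝ) (f : E → EReal) (x : E) : Prop :=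
  IsFiniteAt f x ∧
    regNormalCone (ipProd ip) (epiSet f) (x, (f x).toReal) =
      limNormalCone (ipProd ip) (epiSet f) (x, (f x).toReal)

/-! Real-valued versions: semidifferentiability, gradients. -/

/-- `f` is semidifferentiable at `x`. -/
def SemiDiffAt (f : E → ℝ) (x : E) : Prop :=
  ∀ w : E, ∃ d : ℝ,
    Tendsto (fun p : ℝ × E => (p.1)⁻¹ * (f (x + p.1 • p.2) - f x))
      ((nhdsWithin (0 : ℝ) (Set.Ioi 0)) ×ˢ nhds w) (nhds d)

/-- The (real value of the) subderivative of a real-valued function. -/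
noncomputable def dReal (f : E → ℝ) (x w : E) : ℝ :=
  (subderiv (fun y => ((f y : ℝ) : EReal)) x w).toReal

/-- The second-order difference quotient built from the subderivative. -/
noncomputable def sdq2R (f : E → ℝ) (x : E) (t : ℝ) (w : E) : ℝ :=
  (2 / t ^ 2) * (f (x + t • w) - f x - t * dReal f x w)

/-- `f` is twice semidifferentiable at `x`. -/
def TwiceSemiDiffAt (f : E → ℝ) (x : E) : Prop :=
  SemiDiffAt f x ∧
    ∀ w : E, ∃ d : ℝ,
      Tendsto (fun p : ℝ × E => sdq2R f x p.1 p.2)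
        ((nhdsWithin (0 : ℝ) (Set.Ioi 0)) ×ˢ nhds w) (nhds d)

/-- The second semiderivative `d²f(x)(w)` (the liminf; it is the full limit whenever `f` is
twice semidifferentiable at `x`). -/
noncomputable def secondSemiDeriv (f : E → ℝ) (x w : E) : EReal :=
  Filter.liminf (fun p : ℝ × E => ((sdq2R f x p.1 p.2 : ℝ) : EReal))
    ((nhdsWithin (0 : ℝ) (Set.Ioi 0)) ×ˢ nhds w)

/-- `f` is (Fréchet) differentiable at `x` with gradient `g` (w.r.t. inner product `ip`). -/
def HasGradAt (ip : E → E → ℝ) (f : E → ℝ) (x g : E) : Prop :=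
  Tendsto (fun y : E => (nrm ip (y - x))⁻¹ * (f y - f x - ip g (y - x)))
    (nhdsWithin x {x}ᶜ) (nhds 0)

/-- `f` is locally Lipschitz continuous around `x`. -/
def LocLipAt (ip : E → E → ℝ) (f : E → ℝ) (x : E) : Prop :=
  ∃ V ∈ nhds x, ∃ ℓ : ℝ, 0 ≤ ℓ ∧ ∀ a ∈ V, ∀ b ∈ V, |f a - f b| ≤ ℓ * nrm ip (a - b)

/-- `f` is twice differentiable at `x` with gradient map `G` near `x` and second derivative
(the derivative of `G` at `x`) given by the linear map `Dxx`. -/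
def HasSecondDerivAt (ip : E → E → ℝ) (f : E → EReal) (x : E) (G : E → E) (Dxx : E → E) :
    Prop :=
  ∃ V ∈ nhds x, ∃ fr : E → ℝ,
    (∀ z ∈ V, f z = ((fr z : ℝ) : EReal)) ∧
    (∀ z ∈ V, HasGradAt ip fr z (G z)) ∧
    IsLinearMap ℝ Dxx ∧
    Tendsto (fun z : E => (nrm ip (z - x))⁻¹ • (G z - G x - Dxx (z - x)))
      (nhdsWithin x {x}ᶜ) (nhds 0)

/-- `f` is twice differentiable at `x`. -/
def TwiceDiffAt (ip : E → E → ℝ) (f : E → EReal) (x : E) : Prop :=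
  ∃ G Dxx : E → E, HasSecondDerivAt ip f x G Dxx

end Generic

/-! ## Eigenvalues and spectral machinery -/

open scoped Classical in
/-- The eigenvalues of a real symmetric matrix, arranged in nonincreasing order
(junk value `0` if the matrix is not symmetric). -/
noncomputable def eigval {n : ℕ} (X : Matrix (Fin n) (Fin n) ℝ) : Fin n → ℝ :=
  if h : X.IsHermitian then
    fun i => h.eigenvalues (Tuple.sort (fun j => -h.eigenvalues j) i)
  else 0

/-- `Oⁿ(X)`: orthogonal matrices realizing the ordered spectral decomposition of `X`. -/
def eigOrth {n : ℕ} (X : Matrix (Fin n) (Fin n) ℝ) : Set (Matrix (Fin n) (Fin n) ℝ) :=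
  {U | U * Uᵀ = 1 ∧ X = U * Matrix.diagonal (eigval X) * Uᵀ}

open scoped Classical in
/-- The block `α_m` of indices `j` whose eigenvalue `λ_j(X)` equals `λ_i(X)`. -/
noncomputable def blockSet {n : ℕ} (X : Matrix (Fin n) (Fin n) ℝ) (i : Fin n) :
    Finset (Fin n) :=
  Finset.univ.filter fun j => eigval X j = eigval X i

lemma mem_blockSet_self {n : ℕ} (X : Matrix (Fin n) (Fin n) ℝ) (i : Fin n) :
    i ∈ blockSet X i := by
  simp [blockSet]

/-- The increasing enumeration of the block of `i`. -/
noncomputable def blockEmb {n : ℕ} (X : Matrix (Fin n) (Fin n) ℝ) (i : Fin n) :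
    Fin (blockSet X i).card → Fin n :=
  fun a => ((blockSet X i).orderIsoOfFin rfl a : Fin n)

/-- The position of `i` inside its own block. -/
noncomputable def blockIdx {n : ℕ} (X : Matrix (Fin n) (Fin n) ℝ) (i : Fin n) :
    Fin (blockSet X i).card :=
  ((blockSet X i).orderIsoOfFin rfl).symm ⟨i, mem_blockSet_self X i⟩

/-- The principal submatrix of `M` corresponding to the block of `i` (for `X`). -/
noncomputable def blockMat {n : ℕ} (X M : Matrix (Fin n) (Fin n) ℝ) (i : Fin n) :
    Matrix (Fin (blockSet X i).card) (Fin (blockSet X i).card) ℝ :=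
  Matrix.of fun a b => M (blockEmb X i a) (blockEmb X i b)

/-- The directional derivative `λ'(X;H)` of the ordered eigenvalue map, computed through
`U ∈ Oⁿ(X)`: blockwise ordered eigenvalues of `U_{α_m}ᵀ H U_{α_m}`. -/
noncomputable def lambdaDir {n : ℕ} (X U H : Matrix (Fin n) (Fin n) ℝ) : Fin n → ℝ :=
  fun i => eigval (blockMat X (Uᵀ * H * U) i) (blockIdx X i)

open scoped Classical in
/-- The Moore–Penrose pseudoinverse of a square real matrix, characterized by the four
Penrose equations. -/
noncomputable def pinv {n : ℕ} (A : Matrix (Fin n) (Fin n) ℝ) :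
    Matrix (Fin n) (Fin n) ℝ :=
  if h : ∃ B : Matrix (Fin n) (Fin n) ℝ,
      A * B * A = A ∧ B * A * B = B ∧ (A * B)ᵀ = A * B ∧ (B * A)ᵀ = B * A
  then h.choose else 0

/-- The curvature term `2 ∑ₘ ⟨Diag(y)_{αₘαₘ}, U_{αₘ}ᵀ H (μₘ I - X)† H U_{αₘ}⟩`, written as a
single sum over all indices. -/
noncomputable def curvTerm {n : ℕ} (X U H : Matrix (Fin n) (Fin n) ℝ) (y : Fin n → ℝ) : ℝ :=
  2 * ∑ i : Fin n, y i *
    (Uᵀ * (H * pinv (eigval X i • (1 : Matrix (Fin n) (Fin n) ℝ) - X) * H) * U) i i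

/-- Two symmetric matrices admit a simultaneous ordered spectral decomposition. -/
def simOrdSpec {k : ℕ} (A B : Matrix (Fin k) (Fin k) ℝ) : Prop :=
  ∃ P : Matrix (Fin k) (Fin k) ℝ, P * Pᵀ = 1 ∧
    A = P * Matrix.diagonal (eigval A) * Pᵀ ∧
    B = P * Matrix.diagonal (eigval B) * Pᵀ

/-- The subspace of symmetric `n × n` real matrices. -/
def symSubmodule (n : ℕ) : Submodule ℝ (Matrix (Fin n) (Fin n) ℝ) where
  carrier := {A | A.IsSymm}
  add_mem' := by
    intro a b ha hb
    simp only [Set.mem_setOf_eq, Matrix.IsSymm] at *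
    rw [Matrix.transpose_add, ha, hb]
  zero_mem' := by
    simp only [Set.mem_setOf_eq, Matrix.IsSymm, Matrix.transpose_zero]
  smul_mem' := by
    intro c a ha
    simp only [Set.mem_setOf_eq, Matrix.IsSymm] at *
    rw [Matrix.transpose_smul, ha]

/-- The space `Sⁿ` of symmetric `n × n` real matrices. -/
abbrev Sym (n : ℕ) : Type := ↥(symSubmodule n)

/-- The trace inner product `⟨A, B⟩ = tr(AB)` on `Sⁿ`. -/
noncomputable def ipM {n : ℕ} (A B : Sym n) : ℝ :=
  ((A : Matrix (Fin n) (Fin n) ℝ) * (B : Matrix (Fin n) (Fin n) ℝ)).trace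

/-- The Euclidean inner product on `ℝⁿ`. -/
def ipV {n : ℕ} (v w : Fin n → ℝ) : ℝ :=
  ∑ i, v i * w i

/-- The spectral function `g = θ ∘ λ` on `Sⁿ`. -/
noncomputable def specFn {n : ℕ} (θ : (Fin n → ℝ) → EReal) : Sym n → EReal :=
  fun A => θ (eigval (A : Matrix (Fin n) (Fin n) ℝ))

/-- A function on `ℝⁿ` is symmetric (permutation invariant). -/
def SymmetricFn {n : ℕ} {α : Type*} (θ : (Fin n → ℝ) → α) : Prop :=
  ∀ (x : Fin n → ℝ) (σ : Equiv.Perm (Fin n)), θ (fun i => x (σ i)) = θ x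

/-- The diagonal matrix `Diag(w)` as an element of `Sⁿ`. -/
noncomputable def diagSym {n : ℕ} (w : Fin n → ℝ) : Sym n :=
  ⟨Matrix.diagonal w, Matrix.isSymm_diagonal w⟩

/-- The `i`-th order statistic: `orderStat x i` is the `i`-th largest entry of `x`. -/
noncomputable def orderStat {n : ℕ} (x : Fin n → ℝ) : Fin n → ℝ :=
  fun i => x (Tuple.sort (fun j => -x j) i)

/-! If a symmetric `θ` is twice differentiable at `x = λ(X)`, its gradient there is constant on the
blocks `α_m`, and its Hessian is `Diag(b) + A`, where `b` and the rows and columns of `A` are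
constant on the blocks. A polynomial `p` takes at `x` the values `∇θ(x)` with derivatives `b`. For
`V ∈ Oⁿ(Z)` the gradient `∇g(Z) = V Diag(∇θ(λ(Z))) Vᵀ` equals `p(Z) + V Diag(A (λ(Z) - x)) Vᵀ`
up to `o(λ(Z) - x)`, hence up to `o(Z - X)` because `λ` is Lipschitz. The derivative of `p(Z)` is
given by divided differences. The other term vanishes at `X` and is differentiable there because
block-constant combinations of eigenvalues are differentiable and `V Diag(c) Vᵀ` is continuous at
`X` for block-constant `c`. In an eigenbasis of `X` the resulting quadratic form is the asserted
one, since the eigenvalues of a block of `Uᵀ H U` have the trace and the Frobenius norm of that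
block. Conversely, `θ` is the restriction of `g` to the matrices `U Diag(z) Uᵀ`. -/

section Calculus

open Asymptotics

variable [NormedAddCommGroup E] [NormedSpace ℝ E] {B : E →L[ℝ] E →L[ℝ] ℝ}

theorem isCoercive_of_apply_self_pos [FiniteDimensional ℝ E] (hB : ∀ v ≠ 0, 0 < B v v) :
    IsCoercive B := by
  have : ProperSpace E := FiniteDimensional.proper ℝ E
  obtain ⟨C, hC, hCB⟩ := (isCompact_sphere (0 : E) 1).exists_forall_le'
    (f := fun v => B v v) (by fun_prop) (a := 0)
    fun v hv => hB v (ne_zero_of_mem_unit_sphere ⟨v, hv⟩)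
  refine ⟨C, hC, fun v => ?_⟩
  obtain rfl | hv := eq_or_ne v 0
  · simp
  have h := hCB (‖v‖⁻¹ • v) (by simp [norm_smul, hv])
  simp only [map_smul, _root_.smul_apply, smul_eq_mul] at h
  calc C * ‖v‖ * ‖v‖ ≤ (‖v‖⁻¹ * (‖v‖⁻¹ * B v v)) * ‖v‖ * ‖v‖ := by gcongr
    _ = B v v := by field_simp

theorem isTheta_nrm (hB : IsCoercive B) {α : Type*} (l : Filter α) (u : α → E) :
    (fun a => nrm (fun v w => B v w) (u a)) =Θ[l] u := by
  obtain ⟨C, hC, hCB⟩ := hB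
  constructor
  · refine .of_bound (√‖B‖) (.of_forall fun a => ?_)
    calc ‖nrm (fun v w => B v w) (u a)‖ = √(B (u a) (u a)) :=
          Real.norm_of_nonneg (Real.sqrt_nonneg _)
      _ ≤ √(‖B‖ * ‖u a‖ ^ 2) :=
          Real.sqrt_le_sqrt ((le_abs_self _).trans ((B.le_opNorm₂ _ _).trans_eq (by ring)))
      _ = √‖B‖ * ‖u a‖ := by simp
  · refine .of_bound (√C)⁻¹ (.of_forall fun a => ?_)
    rw [inv_mul_eq_div, le_div_iff₀' (Real.sqrt_pos.2 hC)]
    calc √C * ‖u a‖ = √(C * ‖u a‖ ^ 2) := by simp [hC.le]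
      _ ≤ √(B (u a) (u a)) := Real.sqrt_le_sqrt ((hCB _).trans_eq' (by ring))
      _ = ‖nrm (fun v w => B v w) (u a)‖ := (Real.norm_of_nonneg (Real.sqrt_nonneg _)).symm

variable {F : Type*} [NormedAddCommGroup F] [NormedSpace ℝ F]

theorem tendsto_inv_nrm_smul_iff_hasFDerivAt (hB : IsCoercive B) {f : E → F} {f' : E →L[ℝ] F}
    {x : E} :
    Tendsto (fun y => (nrm (fun v w => B v w) (y - x))⁻¹ • (f y - f x - f' (y - x)))
      (𝓝[≠] x) (𝓝 0) ↔ HasFDerivAt f f' x := by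
  have hθ := isTheta_nrm hB (𝓝[≠] x) fun y => y - x
  have hne : ∀ᶠ y in 𝓝[≠] x, nrm (fun v w => B v w) (y - x) = 0 → f y - f x - f' (y - x) = 0 := by
    filter_upwards [hθ.eq_zero_iff, self_mem_nhdsWithin] with y hy hyx h
    exact absurd (sub_eq_zero.1 (hy.1 h)) hyx
  rw [← hasFDerivWithinAt_univ, ← hasFDerivWithinAt_sdiff_singleton_self,
    ← Set.compl_eq_univ_sdiff, hasFDerivWithinAt_iff_isLittleO, ← hθ.isLittleO_congr_right,
    ← isLittleOTVS_iff_isLittleO (𝕜 := ℝ), isLittleOTVS_iff_tendsto_inv_smul hne]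

theorem hasGradAt_iff_hasFDerivAt (hB : IsCoercive B) {f : E → ℝ} {x g : E} :
    HasGradAt (fun v w => B v w) f x g ↔ HasFDerivAt f (B g) x :=
  tendsto_inv_nrm_smul_iff_hasFDerivAt hB

theorem hasSecondDerivAt_iff [FiniteDimensional ℝ E] (hB : IsCoercive B) {f : E → EReal} {x : E}
    {G D : E → E} :
    HasSecondDerivAt (fun v w => B v w) f x G D ↔
      (∀ᶠ z in 𝓝 x, IsFiniteAt f z) ∧
      (∀ᶠ z in 𝓝 x, HasFDerivAt (fun u => (f u).toReal) (B (G z)) z) ∧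
      ∃ D' : E →L[ℝ] E, ⇑D' = D ∧ HasFDerivAt G D' x := by
  constructor
  · rintro ⟨V, hV, fr, hfr, hG, hlin, hD⟩
    refine ⟨?_, ?_, LinearMap.toContinuousLinearMap hlin.mk', rfl,
      (tendsto_inv_nrm_smul_iff_hasFDerivAt hB).1 hD⟩
    · filter_upwards [hV] with z hz
      simp [IsFiniteAt, hfr z hz]
    · filter_upwards [eventually_mem_nhds_iff.2 hV] with z hz
      refine ((hasGradAt_iff_hasFDerivAt hB).1 (hG z (mem_of_mem_nhds hz))).congr_of_eventuallyEq ?_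
      filter_upwards [hz] with u hu
      simp [hfr u hu]
  · rintro ⟨hfin, hG, D', rfl, hD⟩
    refine ⟨_, hfin.and hG, fun u => (f u).toReal, fun z hz => ?_,
      fun z hz => (hasGradAt_iff_hasFDerivAt hB).2 hz.2, D'.toLinearMap.isLinear,
      (tendsto_inv_nrm_smul_iff_hasFDerivAt hB).2 hD⟩
    exact (EReal.coe_toReal hz.1.1 hz.1.2).symm

theorem apply_injective_of_isCoercive (hB : IsCoercive B) : Function.Injective B := by
  obtain ⟨C, hC, hCB⟩ := hB
  refine (injective_iff_map_eq_zero B).2 fun v hv => ?_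
  by_contra hne
  have hpos : 0 < C * ‖v‖ * ‖v‖ := by positivity
  exact (hpos.trans_le (hCB v)).ne' (by simp [hv])

theorem hasSecondDerivAt_unique [FiniteDimensional ℝ E] (hB : IsCoercive B) {f : E → EReal} {x : E}
    {G G' D D' : E → E} (h : HasSecondDerivAt (fun v w => B v w) f x G D)
    (h' : HasSecondDerivAt (fun v w => B v w) f x G' D') : D = D' := by
  obtain ⟨-, hG, L, rfl, hL⟩ := (hasSecondDerivAt_iff hB).1 h
  obtain ⟨-, hG', L', rfl, hL'⟩ := (hasSecondDerivAt_iff hB).1 h'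
  have hGG' : G =ᶠ[𝓝 x] G' := by
    filter_upwards [hG, hG'] with z hz hz'
    exact apply_injective_of_isCoercive hB (hz.unique hz')
  rw [hL.unique (hL'.congr_of_eventuallyEq hGG')]

theorem hasSecondDerivAt_comp_clm [FiniteDimensional ℝ E] [FiniteDimensional ℝ F]
    (hB : IsCoercive B) {B' : F →L[ℝ] F →L[ℝ] ℝ} (hB' : IsCoercive B') {L : E →L[ℝ] F}
    {Ladj : F →L[ℝ] E} (hadj : ∀ v w, B' v (L w) = B (Ladj v) w) {f : F → EReal} {x : E}
    {G D : F → F} (h : HasSecondDerivAt (fun v w => B' v w) f (L x) G D) :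
    HasSecondDerivAt (fun v w => B v w) (f ∘ L) x (Ladj ∘ G ∘ L) (Ladj ∘ D ∘ L) := by
  obtain ⟨hfin, hG, D', rfl, hD⟩ := (hasSecondDerivAt_iff hB').1 h
  have hL : Tendsto L (𝓝 x) (𝓝 (L x)) := L.continuous.continuousAt
  refine (hasSecondDerivAt_iff hB).2 ⟨hL.eventually hfin, ?_, Ladj ∘L D' ∘L L, rfl,
    Ladj.hasFDerivAt.comp x (hD.comp x L.hasFDerivAt)⟩
  filter_upwards [hL.eventually hG] with z hz
  exact (hz.comp z L.hasFDerivAt).congr_fderiv (ContinuousLinearMap.ext (hadj (G (L z))))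

end Calculus

section InnerProducts

open scoped Matrix.Norms.L2Operator

variable {n : ℕ}

/-- The Euclidean inner product `ipV` as a continuous bilinear form. -/
def ipVBilin (n : ℕ) : (Fin n → ℝ) →L[ℝ] (Fin n → ℝ) →L[ℝ] ℝ :=
  (dotProductBilin ℝ ℝ).toContinuousBilinearMap

/-- The trace inner product `ipM` as a continuous bilinear form. -/
def ipMBilin (n : ℕ) : Sym n →L[ℝ] Sym n →L[ℝ] ℝ :=
  (((LinearMap.mul ℝ (Matrix (Fin n) (Fin n) ℝ)).compr₂ (traceLinearMap (Fin n) ℝ ℝ)).compl₁₂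
    (symSubmodule n).subtype (symSubmodule n).subtype).toContinuousBilinearMap

theorem ipVBilin_apply (v w : Fin n → ℝ) : ipVBilin n v w = ipV v w := rfl

theorem ipMBilin_apply (A B : Sym n) : ipMBilin n A B = ipM A B := rfl

theorem isCoercive_ipVBilin (n : ℕ) : IsCoercive (ipVBilin n) :=
  isCoercive_of_apply_self_pos fun _ hv => dotProduct_star_self_pos_iff.2 hv

theorem isCoercive_ipMBilin (n : ℕ) : IsCoercive (ipMBilin n) :=
  isCoercive_of_apply_self_pos fun A hA => by
    rw [ipMBilin_apply, ipM]
    nth_rw 1 [← A.2.eq]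
    exact (posSemidef_conjTranspose_mul_self A.1).trace_nonneg.lt_of_ne'
      (trace_conjTranspose_mul_self_eq_zero_iff.not.2 (by simpa using hA))

end InnerProducts

section Eigenvalues

variable {n : ℕ} {X Z U : Matrix (Fin n) (Fin n) ℝ}

theorem exists_perm_comp_eq_of_map_univ_eq {α : Type*} [LinearOrder α] {f g : Fin n → α}
    (h : Finset.univ.val.map f = Finset.univ.val.map g) :
    ∃ σ : Equiv.Perm (Fin n), f = g ∘ σ := by
  have hfg : (List.ofFn f).Perm (List.ofFn g) := by
    simpa only [Fin.univ_val_map, Multiset.coe_eq_coe] using h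
  have hsort : f ∘ Tuple.sort f = g ∘ Tuple.sort g :=
    List.ofFn_injective <| List.Perm.eq_of_sortedLE (Tuple.monotone_sort f).sortedLE_ofFn
      (Tuple.monotone_sort g).sortedLE_ofFn <|
      ((Tuple.sort f).ofFn_comp_perm f).trans (hfg.trans ((Tuple.sort g).ofFn_comp_perm g).symm)
  refine ⟨(Tuple.sort f).symm.trans (Tuple.sort g), funext fun i => ?_⟩
  simpa using congrFun hsort ((Tuple.sort f).symm i)

theorem eigval_eq_eigenvalues_comp_sort (hX : X.IsHermitian) :
    eigval X = hX.eigenvalues ∘ Tuple.sort fun j => -hX.eigenvalues j :=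
  dif_pos hX

theorem antitone_eigval (hX : X.IsHermitian) : Antitone (eigval X) := by
  rw [eigval_eq_eigenvalues_comp_sort hX]
  exact fun i j hij => neg_le_neg_iff.1 (Tuple.monotone_sort (fun j => -hX.eigenvalues j) hij)

theorem isHermitian_conj_diagonal (U : Matrix (Fin n) (Fin n) ℝ) (x : Fin n → ℝ) :
    (U * diagonal x * Uᵀ).IsHermitian :=
  isHermitian_mul_mul_conjTranspose U (isHermitian_diagonal x)

theorem submatrix_conj_diagonal_comp (U : Matrix (Fin n) (Fin n) ℝ) (x : Fin n → ℝ)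
    (σ : Equiv.Perm (Fin n)) :
    U.submatrix id σ * diagonal (x ∘ σ) * (U.submatrix id σ)ᵀ = U * diagonal x * Uᵀ := by
  rw [← submatrix_diagonal_equiv, transpose_submatrix, submatrix_mul_equiv, submatrix_mul_equiv,
    submatrix_id_id]

theorem eigOrth_nonempty (hX : X.IsHermitian) : (eigOrth X).Nonempty := by
  let W : Matrix (Fin n) (Fin n) ℝ := hX.eigenvectorUnitary.val
  have hW : W * Wᵀ = 1 := Unitary.mul_star_self_of_mem hX.eigenvectorUnitary.2
  have hspec : X = W * diagonal hX.eigenvalues * Wᵀ := by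
    simpa [Unitary.conjStarAlgAut_apply, star_eq_conjTranspose] using hX.spectral_theorem
  refine ⟨W.submatrix id (Tuple.sort fun j => -hX.eigenvalues j), ?_, ?_⟩
  · simp [hW]
  · rw [eigval_eq_eigenvalues_comp_sort hX, submatrix_conj_diagonal_comp, ← hspec]

theorem exists_perm_eigval_conj_diagonal (hU : U * Uᵀ = 1) (x : Fin n → ℝ) :
    ∃ σ : Equiv.Perm (Fin n), eigval (U * diagonal x * Uᵀ) = x ∘ σ := by
  have hherm := isHermitian_conj_diagonal U x
  have hcharpoly : (U * diagonal x * Uᵀ).charpoly = ∏ i, (.X - .C (x i)) := by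
    rw [charpoly_mul_comm, ← Matrix.mul_assoc, mul_eq_one_comm.1 hU, Matrix.one_mul,
      charpoly_diagonal]
  have hroots : Finset.univ.val.map hherm.eigenvalues = Finset.univ.val.map x := by
    rw [← Polynomial.roots_multiset_prod_X_sub_C (Finset.univ.val.map x), Multiset.map_map]
    exact hherm.roots_charpoly_eq_eigenvalues.symm.trans (congrArg Polynomial.roots hcharpoly)
  obtain ⟨τ, hτ⟩ := exists_perm_comp_eq_of_map_univ_eq hroots
  refine ⟨(Tuple.sort fun j => -hherm.eigenvalues j).trans τ, ?_⟩
  rw [eigval_eq_eigenvalues_comp_sort hherm, Equiv.coe_trans, ← Function.comp_assoc, ← hτ]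

theorem dotProduct_conj_diagonal_mulVec (U : Matrix (Fin n) (Fin n) ℝ) (x v : Fin n → ℝ) :
    v ⬝ᵥ (U * diagonal x * Uᵀ) *ᵥ v = ∑ k, x k * (Uᵀ *ᵥ v) k ^ 2 := by
  rw [← mulVec_mulVec, ← mulVec_mulVec, dotProduct_mulVec, ← mulVec_transpose]
  simp only [dotProduct, mulVec_diagonal]
  exact Finset.sum_congr rfl fun k _ => by ring

theorem dotProduct_self_eq_sum_sq (hU : U * Uᵀ = 1) (v : Fin n → ℝ) :
    v ⬝ᵥ v = ∑ k, (Uᵀ *ᵥ v) k ^ 2 := by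
  simpa [hU] using dotProduct_conj_diagonal_mulVec U 1 v

theorem eigval_mul_le_dotProduct_mulVec (hX : X.IsHermitian) (hU : U ∈ eigOrth X) {i : Fin n}
    {v : Fin n → ℝ} (hv : ∀ k > i, (Uᵀ *ᵥ v) k = 0) : eigval X i * (v ⬝ᵥ v) ≤ v ⬝ᵥ X *ᵥ v := by
  conv_rhs => rw [hU.2, dotProduct_conj_diagonal_mulVec]
  rw [dotProduct_self_eq_sum_sq hU.1, Finset.mul_sum]
  refine Finset.sum_le_sum fun k _ => ?_
  rcases le_or_gt k i with hk | hk
  · gcongr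
    exact antitone_eigval hX hk
  · simp [hv k hk]

theorem dotProduct_mulVec_le_eigval_mul (hX : X.IsHermitian) (hU : U ∈ eigOrth X) {i : Fin n}
    {v : Fin n → ℝ} (hv : ∀ k < i, (Uᵀ *ᵥ v) k = 0) : v ⬝ᵥ X *ᵥ v ≤ eigval X i * (v ⬝ᵥ v) := by
  conv_lhs => rw [hU.2, dotProduct_conj_diagonal_mulVec]
  rw [dotProduct_self_eq_sum_sq hU.1, Finset.mul_sum]
  refine Finset.sum_le_sum fun k _ => ?_
  rcases lt_or_ge k i with hk | hk
  · simp [hv k hk]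
  · gcongr
    exact antitone_eigval hX hk

theorem exists_ne_zero_mulVec_eq_zero_of_lt_of_gt (A B : Matrix (Fin n) (Fin n) ℝ) (i : Fin n) :
    ∃ v ≠ 0, (∀ k < i, (A *ᵥ v) k = 0) ∧ ∀ k > i, (B *ᵥ v) k = 0 := by
  let M : Matrix (Fin n) (Fin n) ℝ := of fun k => if k < i then A k else if i < k then B k else 0
  have hM : M.det = 0 := det_eq_zero_of_row_eq_zero i fun j => by simp [M]
  obtain ⟨v, hv, hMv⟩ := exists_mulVec_eq_zero_iff.2 hM
  refine ⟨v, hv, fun k hk => ?_, fun k hk => ?_⟩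
  · simpa [M, mulVec, hk] using congrFun hMv k
  · simpa [M, mulVec, hk, hk.not_gt] using congrFun hMv k

open scoped Matrix.Norms.L2Operator

theorem dotProduct_mulVec_self_le (A : Matrix (Fin n) (Fin n) ℝ) (v : Fin n → ℝ) :
    v ⬝ᵥ A *ᵥ v ≤ ‖A‖ * (v ⬝ᵥ v) := by
  have hself : v ⬝ᵥ v = ‖WithLp.toLp 2 v‖ ^ 2 := by
    rw [EuclideanSpace.real_norm_sq_eq]; simp [dotProduct, sq]
  calc v ⬝ᵥ A *ᵥ v = inner ℝ (WithLp.toLp 2 (A *ᵥ v)) (WithLp.toLp 2 v) := by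
        simp [EuclideanSpace.inner_toLp_toLp]
    _ ≤ ‖WithLp.toLp 2 (A *ᵥ v)‖ * ‖WithLp.toLp 2 v‖ := real_inner_le_norm _ _
    _ ≤ ‖A‖ * ‖WithLp.toLp 2 v‖ * ‖WithLp.toLp 2 v‖ := by
        gcongr
        exact l2_opNorm_mulVec A (WithLp.toLp 2 v)
    _ = ‖A‖ * (v ⬝ᵥ v) := by rw [hself]; ring

-- Weyl's inequality: the test vector lies in the intersection of the span of the eigenvectors of
-- `X` with index at least `i` and that of the eigenvectors of `Z` with index at most `i`.
theorem eigval_sub_eigval_le (hX : X.IsHermitian) (hZ : Z.IsHermitian) (i : Fin n) :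
    eigval Z i - eigval X i ≤ ‖Z - X‖ := by
  obtain ⟨U, hU⟩ := eigOrth_nonempty hX
  obtain ⟨V, hV⟩ := eigOrth_nonempty hZ
  obtain ⟨v, hv, hUv, hVv⟩ := exists_ne_zero_mulVec_eq_zero_of_lt_of_gt Uᵀ Vᵀ i
  refine le_of_mul_le_mul_right ?_ (dotProduct_star_self_pos_iff.2 hv)
  calc (eigval Z i - eigval X i) * (v ⬝ᵥ v)
      ≤ v ⬝ᵥ Z *ᵥ v - v ⬝ᵥ X *ᵥ v := by
        rw [sub_mul]
        exact sub_le_sub (eigval_mul_le_dotProduct_mulVec hZ hV hVv)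
          (dotProduct_mulVec_le_eigval_mul hX hU hUv)
    _ = v ⬝ᵥ (Z - X) *ᵥ v := by rw [sub_mulVec, dotProduct_sub]
    _ ≤ ‖Z - X‖ * (v ⬝ᵥ v) := dotProduct_mulVec_self_le _ v

theorem norm_eigval_sub_eigval_le (hX : X.IsHermitian) (hZ : Z.IsHermitian) :
    ‖eigval Z - eigval X‖ ≤ ‖Z - X‖ := by
  refine (pi_norm_le_iff_of_nonneg (norm_nonneg _)).2 fun i => abs_sub_le_iff.2 ⟨?_, ?_⟩
  · exact eigval_sub_eigval_le hX hZ i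
  · exact norm_sub_rev X Z ▸ eigval_sub_eigval_le hZ hX i

theorem isHermitian_coe (A : Sym n) : (A : Matrix (Fin n) (Fin n) ℝ).IsHermitian :=
  A.2

theorem lipschitzWith_eigval : LipschitzWith 1 fun A : Sym n => eigval A.val :=
  LipschitzWith.mk_one fun A B => by
    simpa [dist_eq_norm] using norm_eigval_sub_eigval_le (isHermitian_coe B) (isHermitian_coe A)

end Eigenvalues

section Interpolation

open Polynomial

variable {ι K : Type*} [Finite ι] [Field K] {x : ι → K}

theorem exists_polynomial_eval_eq {y : ι → K} (hy : y.FactorsThrough x) :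
    ∃ p : K[X], ∀ i, p.eval (x i) = y i := by
  classical
  cases nonempty_fintype ι
  refine ⟨Lagrange.interpolate (Finset.univ.image x) id (x.extend y 0), fun i => ?_⟩
  rw [← hy.extend_apply 0 i]
  exact Lagrange.eval_interpolate_at_node (v := id) _ (Set.injOn_id _)
    (Finset.mem_image_of_mem x (Finset.mem_univ i))

-- Correct a Lagrange interpolant `q` by a multiple `W * r` of the nodal polynomial `W`: this leaves
-- the values at the nodes alone, and `r` can be chosen to adjust the derivatives freely.
theorem exists_polynomial_eval_eq_derivative_eval_eq {y d : ι → K} (hy : y.FactorsThrough x)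
    (hd : d.FactorsThrough x) :
    ∃ p : K[X], ∀ i, p.eval (x i) = y i ∧ p.derivative.eval (x i) = d i := by
  classical
  cases nonempty_fintype ι
  obtain ⟨q, hq⟩ := exists_polynomial_eval_eq hy
  let W : K[X] := Lagrange.nodal (Finset.univ.image x) id
  obtain ⟨r, hr⟩ : ∃ r : K[X], ∀ i,
      r.eval (x i) = (d i - q.derivative.eval (x i)) / W.derivative.eval (x i) :=
    exists_polynomial_eval_eq fun i j hij => by simp only [hij, hd hij]
  refine ⟨q + W * r, fun i => ?_⟩
  have hmem : x i ∈ Finset.univ.image x := Finset.mem_image_of_mem x (Finset.mem_univ i)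
  have hW : W.eval (x i) = 0 := Lagrange.eval_nodal_at_node (v := id) hmem
  have hW' : W.derivative.eval (x i) ≠ 0 := by
    have h := Lagrange.eval_nodal_derivative_eval_node_eq (v := id) hmem
    rw [id, Lagrange.eval_nodal] at h
    rw [h]
    exact Finset.prod_ne_zero_iff.2 fun u hu => sub_ne_zero.2 (Finset.ne_of_mem_erase hu).symm
  simp [hW, hq, hr, mul_div_cancel₀ _ hW']

end Interpolation

section DividedDifferences

variable {f g : ℝ → ℝ} {a : ℝ}

theorem dslope_const (c a b : ℝ) : dslope (fun _ => c) a b = 0 := by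
  rcases eq_or_ne b a with rfl | h
  · simp
  · rw [dslope_of_ne _ h, slope_def_field, sub_self, zero_div]

theorem dslope_id (a b : ℝ) : dslope id a b = 1 := by
  rcases eq_or_ne b a with rfl | h
  · simp
  · rw [dslope_of_ne _ h, slope_def_field, id, id, div_self (sub_ne_zero.2 h)]

theorem dslope_add (hf : DifferentiableAt ℝ f a) (hg : DifferentiableAt ℝ g a) (b : ℝ) :
    dslope (f + g) a b = dslope f a b + dslope g a b := by
  rcases eq_or_ne b a with rfl | h
  · simp only [dslope_same, deriv_add hf hg]
  · simp only [dslope_of_ne _ h, slope_def_field, Pi.add_apply]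
    ring

theorem dslope_mul (hf : DifferentiableAt ℝ f a) (hg : DifferentiableAt ℝ g a) (b : ℝ) :
    dslope (f * g) a b = f a * dslope g a b + dslope f a b * g b := by
  rcases eq_or_ne b a with rfl | h
  · simp only [dslope_same, deriv_mul hf hg]
    ring
  · simp only [dslope_of_ne _ h, slope_def_field, Pi.mul_apply]
    ring

end DividedDifferences

section Loewner

open Polynomial
open scoped Matrix.Norms.L2Operator

variable {ι : Type*}

/-- The Loewner matrix of `f` at the nodes `x`: its entries are the divided differences of `f`, with
`f'` on coinciding nodes. -/
def loewner (f : ℝ → ℝ) (x : ι → ℝ) : Matrix ι ι ℝ :=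
  of fun i j => dslope f (x i) (x j)

theorem loewner_const (c : ℝ) (x : ι → ℝ) : loewner (fun _ => c) x = 0 := by
  ext i j
  simp [loewner, dslope_const]

theorem loewner_add {f g : ℝ → ℝ} (hf : Differentiable ℝ f) (hg : Differentiable ℝ g) (x : ι → ℝ) :
    loewner (f + g) x = loewner f x + loewner g x := by
  ext i j
  simp [loewner, dslope_add (hf _) (hg _)]

variable [Fintype ι] [DecidableEq ι] {U : Matrix ι ι ℝ}

theorem conj_mul_conj (hU : U * Uᵀ = 1) (A B : Matrix ι ι ℝ) :
    U * A * Uᵀ * (U * B * Uᵀ) = U * (A * B) * Uᵀ := by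
  simp only [Matrix.mul_assoc, ← Matrix.mul_assoc Uᵀ U, mul_eq_one_comm.1 hU, Matrix.one_mul]

theorem aeval_conj_diagonal (hU : U * Uᵀ = 1) (x : ι → ℝ) (p : ℝ[X]) :
    aeval (U * diagonal x * Uᵀ) p = U * diagonal (fun i => p.eval (x i)) * Uᵀ := by
  have hconj := aeval_algHom_apply (Unitary.conjStarAlgAut ℝ (Matrix ι ι ℝ)
    ⟨U, mem_orthogonalGroup_iff _ _ |>.2 hU⟩) (diagonal x) p
  have hdiag := aeval_algHom_apply (diagonalAlgHom (n := ι) (α := ℝ) ℝ) x p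
  simp only [diagonalAlgHom_apply, aeval_pi_apply, coe_aeval_eq_eval] at hdiag
  rw [hdiag] at hconj
  exact hconj

/-- The Schur multiplier `H ↦ U (L ⊙ (Uᵀ H U)) Uᵀ` with symbol `L` in the basis of the columns
of `U`. -/
def schurMul (U L : Matrix ι ι ℝ) : Matrix ι ι ℝ →L[ℝ] Matrix ι ι ℝ :=
  LinearMap.toContinuousLinearMap
    { toFun := fun H => U * (L ⊙ (Uᵀ * H * U)) * Uᵀ
      map_add' := fun H K => by simp [Matrix.mul_add, Matrix.add_mul, hadamard_add]
      map_smul' := fun c H => by simp [hadamard_smul] }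

theorem schurMul_apply (U L H : Matrix ι ι ℝ) :
    schurMul U L H = U * (L ⊙ (Uᵀ * H * U)) * Uᵀ := rfl

theorem loewner_mul {f g : ℝ → ℝ} (hf : Differentiable ℝ f) (hg : Differentiable ℝ g) (x : ι → ℝ) :
    loewner (f * g) x = diagonal (f ∘ x) * loewner g x + loewner f x * diagonal (g ∘ x) := by
  ext i j
  simp [loewner, dslope_mul (hf _) (hg _)]

theorem schurMul_loewner_id (hU : U * Uᵀ = 1) (x : ι → ℝ) :
    schurMul U (loewner id x) = .id ℝ _ := by
  refine ContinuousLinearMap.ext fun H => ?_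
  have hL : loewner id x ⊙ (Uᵀ * H * U) = Uᵀ * H * U := by
    ext i j
    simp [loewner, dslope_id]
  rw [schurMul_apply, hL, ← Matrix.mul_assoc, ← Matrix.mul_assoc, hU, Matrix.one_mul,
    Matrix.mul_assoc, hU, Matrix.mul_one, ContinuousLinearMap.id_apply]

theorem schurMul_loewner_mul_apply (hU : U * Uᵀ = 1) (p q : ℝ[X]) (x : ι → ℝ)
    (H : Matrix ι ι ℝ) :
    schurMul U (loewner (p * q).eval x) H =
      aeval (U * diagonal x * Uᵀ) p * schurMul U (loewner q.eval x) H +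
        schurMul U (loewner p.eval x) H * aeval (U * diagonal x * Uᵀ) q := by
  have heval : (p * q).eval = p.eval * q.eval := funext fun t => eval_mul
  rw [heval, loewner_mul p.differentiable q.differentiable, aeval_conj_diagonal hU,
    aeval_conj_diagonal hU]
  simp only [schurMul_apply, conj_mul_conj hU, ← Matrix.add_mul, ← Matrix.mul_add]
  congr 2
  ext i j
  simp only [hadamard_apply, Matrix.add_apply, diagonal_mul, mul_diagonal, Function.comp_apply]
  ring

theorem hasFDerivAt_aeval_mul (hU : U * Uᵀ = 1) {x : ι → ℝ} {p q : ℝ[X]}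
    (hp : HasFDerivAt (fun Z : Matrix ι ι ℝ => aeval Z p) (schurMul U (loewner p.eval x))
      (U * diagonal x * Uᵀ))
    (hq : HasFDerivAt (fun Z : Matrix ι ι ℝ => aeval Z q) (schurMul U (loewner q.eval x))
      (U * diagonal x * Uᵀ)) :
    HasFDerivAt (fun Z : Matrix ι ι ℝ => aeval Z (p * q)) (schurMul U (loewner (p * q).eval x))
      (U * diagonal x * Uᵀ) := by
  simp only [map_mul]
  refine (hp.mul' hq).congr_fderiv (ContinuousLinearMap.ext fun H => ?_)
  rw [schurMul_loewner_mul_apply hU]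
  simp

/-- The Daleckii–Krein formula for polynomials. -/
theorem hasFDerivAt_aeval_conj_diagonal (hU : U * Uᵀ = 1) (x : ι → ℝ) (p : ℝ[X]) :
    HasFDerivAt (fun Z : Matrix ι ι ℝ => aeval Z p) (schurMul U (loewner p.eval x))
      (U * diagonal x * Uᵀ) := by
  induction p using Polynomial.induction_on with
  | C c =>
    have hzero : schurMul U (loewner (C c).eval x) = 0 := by
      refine ContinuousLinearMap.ext fun H => ?_
      simp [loewner_const, schurMul_apply]
    simp only [hzero, aeval_C]
    exact hasFDerivAt_const (𝕜 := ℝ) _ _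
  | add p q hp hq =>
    have heval : (p + q).eval = p.eval + q.eval := funext fun t => eval_add
    simp only [map_add]
    refine (hp.add hq).congr_fderiv (ContinuousLinearMap.ext fun H => ?_)
    rw [heval, loewner_add p.differentiable q.differentiable]
    simp [schurMul_apply, add_hadamard, Matrix.mul_add, Matrix.add_mul]
  | monomial k c hk =>
    have heval : (X : ℝ[X]).eval = id := funext fun t => eval_X
    rw [pow_succ, ← mul_assoc]
    refine hasFDerivAt_aeval_mul hU hk ?_
    simp only [heval, schurMul_loewner_id hU, aeval_X]
    exact hasFDerivAt_id (𝕜 := ℝ) _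

end Loewner

section DiagonalEmbedding

open scoped Matrix.Norms.L2Operator

variable {n : ℕ} {U : Matrix (Fin n) (Fin n) ℝ}

/-- The embedding `d ↦ U Diag(d) Uᵀ` of `ℝⁿ` into `Sⁿ`. -/
def conjDiag (U : Matrix (Fin n) (Fin n) ℝ) : (Fin n → ℝ) →L[ℝ] Sym n :=
  LinearMap.toContinuousLinearMap
    { toFun := fun d => ⟨U * diagonal d * Uᵀ, isHermitian_conj_diagonal U d⟩
      map_add' := fun d e => Subtype.ext <| by
        simp [← Matrix.mul_add, ← Matrix.add_mul, ← Pi.add_def]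
      map_smul' := fun c d => Subtype.ext <| by simp }

/-- The map `H ↦ diag(Uᵀ H U)`, adjoint to `conjDiag U`. -/
def diagConj (U : Matrix (Fin n) (Fin n) ℝ) : Sym n →L[ℝ] (Fin n → ℝ) :=
  LinearMap.toContinuousLinearMap
    { toFun := fun H => diag (Uᵀ * H.val * U)
      map_add' := fun H K => by simp [Matrix.mul_add, Matrix.add_mul]
      map_smul' := fun c H => by simp }

/-- The projection `A ↦ (A + Aᵀ) / 2` onto `Sⁿ`. -/
def symPart (n : ℕ) : Matrix (Fin n) (Fin n) ℝ →L[ℝ] Sym n :=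
  LinearMap.toContinuousLinearMap
    { toFun := fun A => ⟨(2⁻¹ : ℝ) • (A + Aᵀ), (isSymm_add_transpose_self A).smul _⟩
      map_add' := fun A B => Subtype.ext <| by
        simp [← smul_add, add_add_add_comm]
      map_smul' := fun c A => Subtype.ext <| by simp [smul_comm c] }

theorem coe_conjDiag (U : Matrix (Fin n) (Fin n) ℝ) (d : Fin n → ℝ) :
    (conjDiag U d : Matrix (Fin n) (Fin n) ℝ) = U * diagonal d * Uᵀ := rfl

theorem diagConj_apply (U : Matrix (Fin n) (Fin n) ℝ) (H : Sym n) :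
    diagConj U H = diag (Uᵀ * H.val * U) := rfl

theorem coe_symPart (A : Matrix (Fin n) (Fin n) ℝ) :
    (symPart n A : Matrix (Fin n) (Fin n) ℝ) = (2⁻¹ : ℝ) • (A + Aᵀ) := rfl

theorem conjDiag_eigval {X : Sym n} (hU : U ∈ eigOrth X.val) : conjDiag U (eigval X.val) = X :=
  Subtype.ext hU.2.symm

theorem norm_conjDiag_le (hU : U * Uᵀ = 1) (d : Fin n → ℝ) : ‖conjDiag U d‖ ≤ ‖d‖ := by
  have hmem : U ∈ unitary (Matrix (Fin n) (Fin n) ℝ) := mem_orthogonalGroup_iff _ _ |>.2 hU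
  have hstar : Uᵀ ∈ unitary (Matrix (Fin n) (Fin n) ℝ) := Unitary.star_mem hmem
  rw [Submodule.coe_norm, coe_conjDiag, CStarRing.norm_mul_mem_unitary _ hstar,
    CStarRing.norm_mem_unitary_mul _ hmem, l2_opNorm_diagonal]

theorem trace_conj_diagonal_mul (U A : Matrix (Fin n) (Fin n) ℝ) (d : Fin n → ℝ) :
    (U * diagonal d * Uᵀ * A).trace = ∑ i, d i * (Uᵀ * A * U) i i := by
  rw [Matrix.mul_assoc, Matrix.mul_assoc, trace_mul_comm, Matrix.mul_assoc]
  simp only [trace, diag_apply, diagonal_mul]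

theorem ipM_conjDiag (U : Matrix (Fin n) (Fin n) ℝ) (d : Fin n → ℝ) (H : Sym n) :
    ipM (conjDiag U d) H = ipV d (diagConj U H) :=
  trace_conj_diagonal_mul U H.val d

theorem symPart_coe (A : Sym n) : symPart n A.val = A :=
  Subtype.ext <| by rw [coe_symPart, A.2.eq, ← two_smul ℝ A.val, inv_smul_smul₀ two_ne_zero]

theorem ipM_symPart (A : Matrix (Fin n) (Fin n) ℝ) (H : Sym n) :
    ipM (symPart n A) H = (A * H.val).trace := by
  have htrans : (Aᵀ * H.val).trace = (A * H.val).trace := by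
    rw [← trace_transpose, transpose_mul, transpose_transpose, H.2.eq, trace_mul_comm]
  simp only [ipM, coe_symPart, smul_mul, Matrix.add_mul, trace_smul, trace_add, htrans, smul_eq_mul]
  ring

end DiagonalEmbedding

section SpectralCalculus

open Polynomial Asymptotics
open scoped Matrix.Norms.L2Operator

variable {n : ℕ} {X : Sym n} {U : Matrix (Fin n) (Fin n) ℝ}

theorem aeval_eq_conj_diagonal (hU : U ∈ eigOrth X.val) (p : ℝ[X]) :
    aeval X.val p = U * diagonal (fun i => p.eval (eigval X.val i)) * Uᵀ := by
  rw [← aeval_conj_diagonal hU.1, ← hU.2]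

theorem hasFDerivAt_aeval_coe (hU : U ∈ eigOrth X.val) (p : ℝ[X]) :
    HasFDerivAt (fun Z : Sym n => aeval Z.val p)
      (schurMul U (loewner p.eval (eigval X.val)) ∘L (symSubmodule n).subtypeL) X := by
  have h := hasFDerivAt_aeval_conj_diagonal hU.1 (eigval X.val) p
  rw [← hU.2] at h
  exact h.comp X (symSubmodule n).subtypeL.hasFDerivAt

theorem trace_aeval_eq_sum_eval_eigval (Z : Sym n) (p : ℝ[X]) :
    (aeval Z.val p).trace = ∑ k, p.eval (eigval Z.val k) := by
  obtain ⟨V, hV⟩ := eigOrth_nonempty (isHermitian_coe Z)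
  rw [aeval_eq_conj_diagonal hV, trace_mul_cycle, mul_eq_one_comm.1 hV.1, Matrix.one_mul,
    trace_diagonal]

theorem trace_schurMul (hU : U * Uᵀ = 1) (L H : Matrix (Fin n) (Fin n) ℝ) :
    (schurMul U L H).trace = ∑ i, L i i * (Uᵀ * H * U) i i := by
  rw [schurMul_apply, trace_mul_cycle, mul_eq_one_comm.1 hU, Matrix.one_mul]
  rfl

theorem hasFDerivAt_eval_apply (p : ℝ[X]) (x : Fin n → ℝ) (k : Fin n) :
    HasFDerivAt (fun z : Fin n → ℝ => p.eval (z k))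
      (p.derivative.eval (x k) • ContinuousLinearMap.proj (R := ℝ) k) x := by
  have hproj : HasFDerivAt (𝕜 := ℝ) (fun z : Fin n → ℝ => z k) (.proj k) x := hasFDerivAt_apply k x
  exact (p.hasDerivAt (x k)).comp_hasFDerivAt x hproj

theorem hasFDerivAt_sum_eval (p : ℝ[X]) (x : Fin n → ℝ) :
    HasFDerivAt (fun z : Fin n → ℝ => ∑ k, p.eval (z k))
      (ipVBilin n fun k => p.derivative.eval (x k)) x := by
  refine (HasFDerivAt.fun_sum fun k _ => hasFDerivAt_eval_apply p x k).congr_fderiv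
    (ContinuousLinearMap.ext fun v => ?_)
  simp [ipVBilin_apply, ipV]

theorem hasFDerivAt_pi_eval (p : ℝ[X]) (x : Fin n → ℝ) :
    HasFDerivAt (fun (z : Fin n → ℝ) k => p.eval (z k))
      (LinearMap.toContinuousLinearMap (diagonal fun k => p.derivative.eval (x k)).mulVecLin) x :=
  hasFDerivAt_pi'.2 fun k => (hasFDerivAt_eval_apply p x k).congr_fderiv <|
    ContinuousLinearMap.ext fun v => by simp [mulVec_diagonal]

theorem hasFDerivAt_sum_eval_eigval (hU : U ∈ eigOrth X.val) (p : ℝ[X]) :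
    HasFDerivAt (fun Z : Sym n => ∑ k, p.eval (eigval Z.val k))
      (ipMBilin n (conjDiag U fun k => p.derivative.eval (eigval X.val k))) X := by
  simp only [← trace_aeval_eq_sum_eval_eigval]
  refine ((LinearMap.toContinuousLinearMap (traceLinearMap (Fin n) ℝ ℝ)).hasFDerivAt.comp X
    (hasFDerivAt_aeval_coe hU p)).congr_fderiv (ContinuousLinearMap.ext fun H => ?_)
  rw [ipMBilin_apply, ipM_conjDiag]
  exact (trace_schurMul hU.1 _ _).trans (by simp [loewner, ipV, diagConj_apply])

theorem eigval_sub_isBigO (X : Sym n) :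
    (fun Z : Sym n => eigval Z.val - eigval X.val) =O[𝓝 X] fun Z => Z - X :=
  .of_bound 1 (.of_forall fun Z => by
    simpa [dist_eq_norm] using lipschitzWith_eigval.dist_le_mul Z X)

theorem tendsto_eigval (X : Sym n) :
    Tendsto (fun Z : Sym n => eigval Z.val) (𝓝 X) (𝓝 (eigval X.val)) :=
  lipschitzWith_eigval.continuous.continuousAt

theorem comp_eigval_isLittleO {F : Type*} [NormedAddCommGroup F] [NormedSpace ℝ F]
    {R : (Fin n → ℝ) → F} (hR : HasFDerivAt R (0 : (Fin n → ℝ) →L[ℝ] F) (eigval X.val)) :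
    (fun Z : Sym n => R (eigval Z.val) - R (eigval X.val)) =o[𝓝 X] fun Z => Z - X := by
  have h := (hR.isLittleO.comp_tendsto (tendsto_eigval X)).trans_isBigO (eigval_sub_isBigO X)
  simpa [Function.comp_def] using h

-- Subtracting a trace polynomial with the same gradient leaves a remainder `o(λ(Z) - λ(X))`.
theorem hasFDerivAt_comp_eigval (hU : U ∈ eigOrth X.val) {φ : (Fin n → ℝ) → ℝ} {c : Fin n → ℝ}
    (hc : c.FactorsThrough (eigval X.val)) (hφ : HasFDerivAt φ (ipVBilin n c) (eigval X.val)) :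
    HasFDerivAt (fun Z : Sym n => φ (eigval Z.val)) (ipMBilin n (conjDiag U c)) X := by
  obtain ⟨p, hp⟩ := exists_polynomial_eval_eq_derivative_eval_eq (y := 0) (fun _ _ _ => rfl) hc
  obtain rfl : (fun k => p.derivative.eval (eigval X.val k)) = c := funext fun k => (hp k).2
  have hrem : HasFDerivAt (fun z => φ z - ∑ k, p.eval (z k)) (0 : (Fin n → ℝ) →L[ℝ] ℝ)
      (eigval X.val) :=
    (hφ.sub (hasFDerivAt_sum_eval p _)).congr_fderiv (sub_self _)
  have hrem' : HasFDerivAt (fun Z : Sym n => φ (eigval Z.val) - ∑ k, p.eval (eigval Z.val k))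
      (0 : Sym n →L[ℝ] ℝ) X :=
    .of_isLittleO (by simpa using comp_eigval_isLittleO hrem)
  simpa using hrem'.fun_add (hasFDerivAt_sum_eval_eigval hU p)

variable {V : Sym n → Matrix (Fin n) (Fin n) ℝ}

theorem hasFDerivAt_conjDiag_of_zero (hV : ∀ Z : Sym n, V Z * (V Z)ᵀ = 1)
    {R : (Fin n → ℝ) → Fin n → ℝ} (hR₀ : R (eigval X.val) = 0)
    (hR : HasFDerivAt R (0 : (Fin n → ℝ) →L[ℝ] Fin n → ℝ) (eigval X.val)) :
    HasFDerivAt (fun Z : Sym n => conjDiag (V Z) (R (eigval Z.val))) (0 : Sym n →L[ℝ] Sym n) X := by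
  have hsmall := comp_eigval_isLittleO hR
  refine .of_isLittleO (IsBigO.trans_isLittleO (.of_bound 1 (.of_forall fun Z => ?_)) hsmall)
  simpa [hR₀] using norm_conjDiag_le (hV Z) _

theorem conjDiag_eval_eigval (hU : U ∈ eigOrth X.val) (p : ℝ[X]) :
    conjDiag U (fun k => p.eval (eigval X.val k)) = symPart n (aeval X.val p) := by
  rw [aeval_eq_conj_diagonal hU, ← coe_conjDiag, symPart_coe]

theorem tendsto_conjDiag (hV : ∀ Z : Sym n, V Z ∈ eigOrth Z.val) (hU : U ∈ eigOrth X.val)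
    {c : Fin n → ℝ} (hc : c.FactorsThrough (eigval X.val)) :
    Tendsto (fun Z => conjDiag (V Z) c) (𝓝 X) (𝓝 (conjDiag U c)) := by
  obtain ⟨p, hp⟩ := exists_polynomial_eval_eq hc
  have haeval : Tendsto (fun Z : Sym n => symPart n (aeval Z.val p)) (𝓝 X) (𝓝 (conjDiag U c)) := by
    rw [← funext hp, conjDiag_eval_eigval hU]
    exact ((symPart n).continuous.continuousAt.comp
      (hasFDerivAt_aeval_coe hU p).continuousAt).tendsto
  have hrem : Tendsto (fun Z : Sym n => c - fun k => p.eval (eigval Z.val k)) (𝓝 X) (𝓝 0) := by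
    have hcont : Continuous fun z : Fin n → ℝ => c - fun k => p.eval (z k) := by fun_prop
    have h := (hcont.tendsto _).comp (tendsto_eigval X)
    rwa [funext hp, sub_self] at h
  have hsmall : Tendsto (fun Z => conjDiag (V Z) (c - fun k => p.eval (eigval Z.val k)))
      (𝓝 X) (𝓝 0) :=
    squeeze_zero_norm (fun Z => norm_conjDiag_le (hV Z).1 _)
      (tendsto_zero_iff_norm_tendsto_zero.1 hrem)
  simpa [map_sub, conjDiag_eval_eigval (hV _)] using hsmall.add haeval

theorem hasFDerivAt_mulVec_eigval_sub (hU : U ∈ eigOrth X.val) {A : Matrix (Fin n) (Fin n) ℝ}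
    (hrow : ∀ k, (A k).FactorsThrough (eigval X.val)) :
    HasFDerivAt (fun Z : Sym n => A *ᵥ (eigval Z.val - eigval X.val))
      (LinearMap.toContinuousLinearMap A.mulVecLin ∘L diagConj U) X := by
  refine hasFDerivAt_pi'.2 fun k => ?_
  have hlin : HasFDerivAt (fun z => ipVBilin n (A k) (z - eigval X.val)) (ipVBilin n (A k))
      (eigval X.val) :=
    (ipVBilin n (A k)).hasFDerivAt.comp _ ((hasFDerivAt_id _).sub_const _)
  exact (hasFDerivAt_comp_eigval hU (hrow k) hlin).congr_fderiv
    (ContinuousLinearMap.ext fun H => ipM_conjDiag U (A k) H)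

theorem map_mulVec_eq_sum {F : Type*} [NormedAddCommGroup F] [NormedSpace ℝ F]
    (f : (Fin n → ℝ) →L[ℝ] F) (A : Matrix (Fin n) (Fin n) ℝ) (v : Fin n → ℝ) :
    f (A *ᵥ v) = ∑ l, v l • f (A.col l) := by
  rw [mulVec_eq_sum, map_sum]
  simp [col]

theorem hasFDerivAt_conjDiag_mulVec (hV : ∀ Z : Sym n, V Z ∈ eigOrth Z.val)
    (hU : U ∈ eigOrth X.val) {A : Matrix (Fin n) (Fin n) ℝ}
    (hrow : ∀ k, (A k).FactorsThrough (eigval X.val))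
    (hcol : ∀ l, (A.col l).FactorsThrough (eigval X.val)) :
    HasFDerivAt (fun Z : Sym n => conjDiag (V Z) (A *ᵥ (eigval Z.val - eigval X.val)))
      (conjDiag U ∘L LinearMap.toContinuousLinearMap A.mulVecLin ∘L diagConj U) X := by
  have hmain := (conjDiag U).hasFDerivAt.comp X (hasFDerivAt_mulVec_eigval_sub hU hrow)
  have hvar : (fun Z => (conjDiag (V Z) - conjDiag U) (A *ᵥ (eigval Z.val - eigval X.val)))
      =o[𝓝 X] fun Z => Z - X := by
    simp only [map_mulVec_eq_sum]
    refine IsLittleO.fun_sum fun l _ => ?_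
    have hδ : (fun Z : Sym n => (eigval Z.val - eigval X.val) l) =O[𝓝 X] fun Z => Z - X :=
      isBigO_pi.1 (eigval_sub_isBigO X) l
    have hcont : (fun Z => conjDiag (V Z) (A.col l) - conjDiag U (A.col l)) =o[𝓝 X]
        fun _ => (1 : ℝ) :=
      (isLittleO_one_iff ℝ).2 (tendsto_sub_nhds_zero_iff.2 (tendsto_conjDiag hV hU (hcol l)))
    simpa only [_root_.sub_apply, smul_eq_mul, mul_one, isLittleO_norm_right] using
      hδ.norm_right.smul_isLittleO hcont
  have hvar' : HasFDerivAt
      (fun Z => (conjDiag (V Z) - conjDiag U) (A *ᵥ (eigval Z.val - eigval X.val)))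
      (0 : Sym n →L[ℝ] Sym n) X := .of_isLittleO (by simpa using hvar)
  simpa using hvar'.fun_add hmain

-- Near `λ(X)` the map `G` is `z ↦ (p (z k))ₖ + A (z - λ(X))` up to a remainder `o(z - λ(X))`.
theorem hasFDerivAt_conjDiag_comp_eigval (hV : ∀ Z : Sym n, V Z ∈ eigOrth Z.val)
    (hU : U ∈ eigOrth X.val) {G : (Fin n → ℝ) → Fin n → ℝ} {p : ℝ[X]}
    {A : Matrix (Fin n) (Fin n) ℝ} (hp : ∀ k, p.eval (eigval X.val k) = G (eigval X.val) k)
    (hrow : ∀ k, (A k).FactorsThrough (eigval X.val))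
    (hcol : ∀ l, (A.col l).FactorsThrough (eigval X.val))
    (hG : HasFDerivAt G (LinearMap.toContinuousLinearMap
      (diagonal (fun k => p.derivative.eval (eigval X.val k)) + A).mulVecLin) (eigval X.val)) :
    HasFDerivAt (fun Z : Sym n => conjDiag (V Z) (G (eigval Z.val)))
      (symPart n ∘L schurMul U (loewner p.eval (eigval X.val)) ∘L (symSubmodule n).subtypeL +
        conjDiag U ∘L LinearMap.toContinuousLinearMap A.mulVecLin ∘L diagConj U) X := by
  let R : (Fin n → ℝ) → Fin n → ℝ := fun z => G z - ((p.eval <| z ·) + A *ᵥ (z - eigval X.val))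
  have hR₀ : R (eigval X.val) = 0 := by
    ext k
    simp [R, hp]
  have hA : HasFDerivAt (fun z => A *ᵥ (z - eigval X.val))
      (LinearMap.toContinuousLinearMap A.mulVecLin) (eigval X.val) :=
    (LinearMap.toContinuousLinearMap A.mulVecLin).hasFDerivAt.comp _
      ((hasFDerivAt_id _).sub_const _)
  have hR : HasFDerivAt R (0 : (Fin n → ℝ) →L[ℝ] Fin n → ℝ) (eigval X.val) := by
    refine (hG.fun_sub ((hasFDerivAt_pi_eval p _).fun_add hA)).congr_fderiv
      (ContinuousLinearMap.ext fun v => ?_)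
    simp
  have hpoly := (symPart n).hasFDerivAt.comp X (hasFDerivAt_aeval_coe hU p)
  refine (((hpoly.fun_add (hasFDerivAt_conjDiag_mulVec hV hU hrow hcol)).fun_add
    (hasFDerivAt_conjDiag_of_zero (fun Z => (hV Z).1) hR₀ hR)).congr_fderiv
    (add_zero _)).congr_of_eventuallyEq (.of_forall fun Z => ?_)
  simp only [Function.comp_apply, ← conjDiag_eval_eigval (hV Z), ← map_add, R]
  rw [add_sub_cancel]

end SpectralCalculus

section BlockInvariance

variable {ι α β : Type*} {x : ι → α}

theorem factorsThrough_of_forall_comp_perm {c : ι → β}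
    (h : ∀ σ : Equiv.Perm ι, x ∘ σ = x → c ∘ σ = c) : c.FactorsThrough x := fun i j hij => by
  classical
  simpa using congrFun (h (Equiv.swap i j) (funext (Equiv.apply_swap_eq_self hij))) j

theorem exists_perm_comp_eq_apply_eq {i j k l : ι} (hij : i ≠ j) (hkl : k ≠ l) (hik : x i = x k)
    (hjl : x j = x l) : ∃ σ : Equiv.Perm ι, x ∘ σ = x ∧ σ i = k ∧ σ j = l := by
  classical
  have hj : x (Equiv.swap i k j) = x l := (Equiv.apply_swap_eq_self hik j).trans hjl
  have hk : Equiv.swap i k j ≠ k := by simpa [Equiv.swap_apply_eq_iff] using hij.symm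
  refine ⟨Equiv.swap i k |>.trans (Equiv.swap (Equiv.swap i k j) l), funext fun m => ?_, ?_, ?_⟩
  · simp [Equiv.apply_swap_eq_self hj, Equiv.apply_swap_eq_self hik]
  · simp [Equiv.swap_apply_of_ne_of_ne hk.symm hkl]
  · simp

theorem exists_eq_diagonal_add [DecidableEq ι] {R : Type*} [AddCommGroup R] {M : Matrix ι ι R}
    (hM : ∀ σ : Equiv.Perm ι, x ∘ σ = x → M.submatrix σ σ = M) :
    ∃ (b : ι → R) (A : Matrix ι ι R), b.FactorsThrough x ∧ (∀ k, (A k).FactorsThrough x) ∧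
      (∀ l, (A.col l).FactorsThrough x) ∧ M = diagonal b + A := by
  let pairs : {q : ι × ι // q.1 ≠ q.2} → α × α := fun q => (x q.1.1, x q.1.2)
  let entries : {q : ι × ι // q.1 ≠ q.2} → R := fun q => M q.1.1 q.1.2
  have hentries : entries.FactorsThrough pairs := by
    rintro ⟨⟨i, j⟩, hij⟩ ⟨⟨k, l⟩, hkl⟩ h
    obtain ⟨hik, hjl⟩ := Prod.ext_iff.1 h
    obtain ⟨σ, hσ, hi, hj⟩ := exists_perm_comp_eq_apply_eq hij hkl hik hjl
    simpa [entries, hi, hj] using (congrFun₂ (hM σ hσ) i j).symm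
  let A : Matrix ι ι R := of fun k l => pairs.extend entries 0 (x k, x l)
  have hA {i j : ι} (hij : i ≠ j) : A i j = M i j := hentries.extend_apply 0 ⟨(i, j), hij⟩
  have hdiag : (diag M).FactorsThrough x := factorsThrough_of_forall_comp_perm fun σ hσ =>
    congrArg diag (hM σ hσ)
  refine ⟨fun i => M i i - A i i, A, fun i j hij => ?_, fun k i j hij => ?_, fun l i j hij => ?_,
    ?_⟩
  · exact congrArg₂ (· - ·) (hdiag hij) (by simp [A, hij])
  · simp [A, hij]
  · simp [A, col, hij]
  · ext i j
    rcases eq_or_ne i j with rfl | hij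
    · simp
    · simp [hij, hA hij]

end BlockInvariance

section SymmetricFunctions

open scoped Matrix.Norms.L2Operator

variable {n : ℕ} {φ : (Fin n → ℝ) → ℝ} {x : Fin n → ℝ}

/-- The permutation of coordinates `z ↦ z ∘ σ` as a continuous linear map. -/
def permCLM (σ : Equiv.Perm (Fin n)) : (Fin n → ℝ) →L[ℝ] (Fin n → ℝ) :=
  LinearMap.toContinuousLinearMap (LinearMap.funLeft ℝ ℝ σ)

theorem permCLM_apply (σ : Equiv.Perm (Fin n)) (z : Fin n → ℝ) : permCLM σ z = z ∘ σ := rfl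

theorem ipVBilin_comp_perm (σ : Equiv.Perm (Fin n)) (c v : Fin n → ℝ) :
    ipVBilin n (c ∘ σ) (v ∘ σ) = ipVBilin n c v :=
  Equiv.sum_comp σ fun i => c i * v i

theorem hasFDerivAt_comp_perm (hφ : SymmetricFn φ) (σ : Equiv.Perm (Fin n)) {c : Fin n → ℝ}
    (h : HasFDerivAt φ (ipVBilin n c) x) : HasFDerivAt φ (ipVBilin n (c ∘ σ)) (x ∘ σ) := by
  have hx : permCLM σ⁻¹ (x ∘ σ) = x := by ext; simp [permCLM_apply]
  rw [← hx] at h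
  refine ((h.comp _ (permCLM σ⁻¹).hasFDerivAt).congr_fderiv
    (ContinuousLinearMap.ext fun v => ?_)).congr_of_eventuallyEq
    (.of_forall fun z => (hφ z σ⁻¹).symm)
  rw [ContinuousLinearMap.comp_apply, ← ipVBilin_comp_perm σ]
  congr 1
  ext
  simp [permCLM_apply]

theorem gradient_comp_perm (hφ : SymmetricFn φ) {σ : Equiv.Perm (Fin n)} {c d : Fin n → ℝ}
    (h : HasFDerivAt φ (ipVBilin n c) x) (h' : HasFDerivAt φ (ipVBilin n d) (x ∘ σ)) :
    d = c ∘ σ :=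
  apply_injective_of_isCoercive (isCoercive_ipVBilin n) (h'.unique (hasFDerivAt_comp_perm hφ σ h))

theorem gradient_factorsThrough (hφ : SymmetricFn φ) {c : Fin n → ℝ}
    (h : HasFDerivAt φ (ipVBilin n c) x) : c.FactorsThrough x :=
  factorsThrough_of_forall_comp_perm fun _ hσ => (gradient_comp_perm hφ h (hσ.symm ▸ h)).symm

theorem hessian_submatrix_perm (hφ : SymmetricFn φ) {G : (Fin n → ℝ) → Fin n → ℝ}
    (hG : ∀ᶠ z in 𝓝 x, HasFDerivAt φ (ipVBilin n (G z)) z) {M : Matrix (Fin n) (Fin n) ℝ}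
    (hM : HasFDerivAt G (LinearMap.toContinuousLinearMap M.mulVecLin) x)
    {σ : Equiv.Perm (Fin n)} (hσ : x ∘ σ = x) : M.submatrix σ σ = M := by
  have hperm : Tendsto (permCLM σ) (𝓝 x) (𝓝 x) := by
    simpa only [permCLM_apply, hσ] using (permCLM σ).continuous.tendsto x
  have hGσ : (fun z => G (permCLM σ z)) =ᶠ[𝓝 x] fun z => permCLM σ (G z) := by
    filter_upwards [hG, hperm.eventually hG] with z hz hzσ
    exact gradient_comp_perm hφ hz hzσ
  have hleft : HasFDerivAt (fun z => G (permCLM σ z))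
      (LinearMap.toContinuousLinearMap M.mulVecLin ∘L permCLM σ) x :=
    HasFDerivAt.comp x (by rwa [permCLM_apply, hσ]) (permCLM σ).hasFDerivAt
  have hright := (permCLM σ).hasFDerivAt.comp x hM
  have hcomm := hleft.unique (hright.congr_of_eventuallyEq hGσ)
  refine mulVec_injective (funext fun v => ?_)
  have h : M *ᵥ ((v ∘ σ.symm) ∘ σ) = (M *ᵥ (v ∘ σ.symm)) ∘ σ :=
    DFunLike.congr_fun hcomm (v ∘ σ.symm)
  rw [submatrix_mulVec_equiv, ← h, Function.comp_assoc, σ.symm_comp_self, Function.comp_id]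

end SymmetricFunctions

section Pseudoinverse

variable {n : ℕ} {A B C : Matrix (Fin n) (Fin n) ℝ}

/-- The four Penrose equations, saying that `B` is a Moore–Penrose pseudoinverse of `A`. -/
structure IsPinv (A B : Matrix (Fin n) (Fin n) ℝ) : Prop where
  mul_mul_left : A * B * A = A
  mul_mul_right : B * A * B = B
  isSymm_left : (A * B)ᵀ = A * B
  isSymm_right : (B * A)ᵀ = B * A

theorem IsPinv.transpose (h : IsPinv A B) : IsPinv Aᵀ Bᵀ where
  mul_mul_left := by
    simpa only [transpose_mul, Matrix.mul_assoc] using congrArg Matrix.transpose h.mul_mul_left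
  mul_mul_right := by
    simpa only [transpose_mul, Matrix.mul_assoc] using congrArg Matrix.transpose h.mul_mul_right
  isSymm_left := by rw [← transpose_mul, h.isSymm_right, h.isSymm_right]
  isSymm_right := by rw [← transpose_mul, h.isSymm_left, h.isSymm_left]

theorem IsPinv.mul_eq_mul (hB : IsPinv A B) (hC : IsPinv A C) : A * B = A * C :=
  calc A * B = ((A * C) * (A * B))ᵀ := by rw [← Matrix.mul_assoc, hC.mul_mul_left, hB.isSymm_left]
    _ = (A * B) * (A * C) := by rw [transpose_mul, hB.isSymm_left, hC.isSymm_left]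
    _ = A * C := by rw [← Matrix.mul_assoc, hB.mul_mul_left]

theorem IsPinv.unique (hB : IsPinv A B) (hC : IsPinv A C) : B = C := by
  have hmul : B * A = C * A := by
    simpa using congrArg Matrix.transpose (hB.transpose.mul_eq_mul hC.transpose)
  rw [← hB.mul_mul_right, hmul, Matrix.mul_assoc, hB.mul_eq_mul hC, ← Matrix.mul_assoc,
    hC.mul_mul_right]

theorem IsPinv.pinv_eq (h : IsPinv A B) : pinv A = B := by
  have hex : ∃ B : Matrix (Fin n) (Fin n) ℝ,
      A * B * A = A ∧ B * A * B = B ∧ (A * B)ᵀ = A * B ∧ (B * A)ᵀ = B * A := ⟨B, h.1, h.2, h.3, h.4⟩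
  obtain ⟨h₁, h₂, h₃, h₄⟩ := hex.choose_spec
  rw [pinv, dif_pos hex]
  exact IsPinv.unique ⟨h₁, h₂, h₃, h₄⟩ h

variable {U : Matrix (Fin n) (Fin n) ℝ}

theorem pinv_conj_diagonal (hU : U * Uᵀ = 1) (d : Fin n → ℝ) :
    pinv (U * diagonal d * Uᵀ) = U * diagonal d⁻¹ * Uᵀ := by
  refine IsPinv.pinv_eq ⟨?_, ?_, ?_, ?_⟩
  · simp only [conj_mul_conj hU, diagonal_mul_diagonal, Pi.inv_apply, mul_inv_mul_cancel]
  · have hinv (i : Fin n) : (d i)⁻¹ * d i * (d i)⁻¹ = (d i)⁻¹ := by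
      simpa only [inv_inv] using mul_inv_mul_cancel (d i)⁻¹
    simp only [conj_mul_conj hU, diagonal_mul_diagonal, Pi.inv_def, hinv]
  all_goals
    rw [conj_mul_conj hU, diagonal_mul_diagonal]
    exact isHermitian_conj_diagonal U _

theorem pinv_smul_one_sub {X : Matrix (Fin n) (Fin n) ℝ} (hU : U ∈ eigOrth X) (μ : ℝ) :
    pinv (μ • (1 : Matrix (Fin n) (Fin n) ℝ) - X) =
      U * diagonal (fun j => (μ - eigval X j)⁻¹) * Uᵀ := by
  have hX : μ • (1 : Matrix (Fin n) (Fin n) ℝ) - X =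
      U * diagonal (fun j => μ - eigval X j) * Uᵀ := by
    rw [← diagonal_sub, Matrix.mul_sub, Matrix.sub_mul, ← hU.2, ← smul_one_eq_diagonal]
    simp [hU.1]
  rw [hX, pinv_conj_diagonal hU.1, Pi.inv_def]

theorem curvTerm_eq {X H : Matrix (Fin n) (Fin n) ℝ} (hU : U ∈ eigOrth X) (hH : H.IsSymm)
    (y : Fin n → ℝ) :
    curvTerm X U H y =
      2 * ∑ i, ∑ j, y i * (eigval X i - eigval X j)⁻¹ * (Uᵀ * H * U) i j ^ 2 := by
  rw [curvTerm]
  congr 1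
  refine Finset.sum_congr rfl fun i _ => ?_
  have hassoc (d : Fin n → ℝ) : Uᵀ * (H * (U * diagonal d * Uᵀ) * H) * U =
      Uᵀ * H * U * diagonal d * (Uᵀ * H * U)ᵀ := by
    simp only [transpose_mul, transpose_transpose, hH.eq, Matrix.mul_assoc]
  rw [pinv_smul_one_sub hU, hassoc, Matrix.mul_apply, Finset.mul_sum]
  refine Finset.sum_congr rfl fun j _ => ?_
  rw [mul_diagonal, transpose_apply]
  ring

end Pseudoinverse

section BlockEigenvalues

open Polynomial

variable {n : ℕ} {X U H : Matrix (Fin n) (Fin n) ℝ}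

theorem sum_eigval (hX : X.IsHermitian) : ∑ k, eigval X k = X.trace := by
  simpa using (trace_aeval_eq_sum_eval_eigval ⟨X, hX⟩ .X).symm

theorem sum_eigval_sq (hX : X.IsHermitian) : ∑ k, eigval X k ^ 2 = ∑ k, ∑ l, X k l ^ 2 := by
  have htrace : (X * X).trace = ∑ k, eigval X k ^ 2 := by
    simpa [sq] using trace_aeval_eq_sum_eval_eigval ⟨X, hX⟩ (.X * .X)
  rw [← htrace]
  simp only [trace, diag_apply, Matrix.mul_apply, sq]
  exact Finset.sum_congr rfl fun k _ => Finset.sum_congr rfl fun l _ => by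
    rw [← hX.apply l k, star_trivial]

theorem mem_blockSet {i k : Fin n} : k ∈ blockSet X i ↔ eigval X k = eigval X i := by
  simp [blockSet]

theorem blockSet_eq {i k : Fin n} (hk : k ∈ blockSet X i) : blockSet X k = blockSet X i := by
  ext l
  rw [mem_blockSet, mem_blockSet, mem_blockSet.1 hk]

theorem blockEmb_mem (i : Fin n) (a : Fin (blockSet X i).card) : blockEmb X i a ∈ blockSet X i :=
  ((blockSet X i).orderIsoOfFin rfl a).2

theorem sum_blockSet (i : Fin n) (f : Fin n → ℝ) :
    ∑ k ∈ blockSet X i, f k = ∑ a, f (blockEmb X i a) := by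
  rw [← Finset.sum_coe_sort]
  exact (Equiv.sum_comp ((blockSet X i).orderIsoOfFin rfl).toEquiv fun k => f k).symm

theorem lambdaDir_of_mem_blockSet {i k : Fin n} (hk : k ∈ blockSet X i) :
    lambdaDir X U H k = eigval (blockMat X (Uᵀ * H * U) i)
      (((blockSet X i).orderIsoOfFin rfl).symm ⟨k, hk⟩) := by
  have hcongr (s t : Finset (Fin n)) (hst : s = t) (hs : k ∈ s) (ht : k ∈ t) :
      eigval (of fun a b => (Uᵀ * H * U) (s.orderIsoOfFin rfl a) (s.orderIsoOfFin rfl b))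
          ((s.orderIsoOfFin rfl).symm ⟨k, hs⟩) =
        eigval (of fun a b => (Uᵀ * H * U) (t.orderIsoOfFin rfl a) (t.orderIsoOfFin rfl b))
          ((t.orderIsoOfFin rfl).symm ⟨k, ht⟩) := by
    subst hst
    rfl
  exact hcongr _ _ (blockSet_eq hk) (mem_blockSet_self X k) hk

theorem lambdaDir_blockEmb (i : Fin n) (a : Fin (blockSet X i).card) :
    lambdaDir X U H (blockEmb X i a) = eigval (blockMat X (Uᵀ * H * U) i) a := by
  rw [lambdaDir_of_mem_blockSet (blockEmb_mem i a)]
  exact congrArg _ (((blockSet X i).orderIsoOfFin rfl).symm_apply_apply a)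

theorem isHermitian_blockMat (X : Matrix (Fin n) (Fin n) ℝ) (hH : H.IsHermitian) (i : Fin n) :
    (blockMat X (Uᵀ * H * U) i).IsHermitian :=
  (isHermitian_conjTranspose_mul_mul U hH).submatrix (blockEmb X i)

theorem sum_mul_eq_sum_mul_of_blocks {c f g : Fin n → ℝ} (hc : c.FactorsThrough (eigval X))
    (h : ∀ i, ∑ k ∈ blockSet X i, f k = ∑ k ∈ blockSet X i, g k) :
    ∑ k, c k * f k = ∑ k, c k * g k := by
  classical
  have hblock (i : Fin n) (f : Fin n → ℝ) :
      ∑ k ∈ blockSet X i, c k * f k = c i * ∑ k ∈ blockSet X i, f k := by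
    rw [Finset.mul_sum]
    exact Finset.sum_congr rfl fun k hk => by rw [hc (mem_blockSet.1 hk)]
  have hfiber (f : Fin n → ℝ) : ∑ μ ∈ Finset.univ.image (eigval X),
      ∑ k with eigval X k = μ, c k * f k = ∑ k, c k * f k :=
    Finset.sum_fiberwise_of_maps_to (fun k _ => Finset.mem_image_of_mem _ (Finset.mem_univ k)) _
  rw [← hfiber f, ← hfiber g]
  refine Finset.sum_congr rfl fun μ hμ => ?_
  obtain ⟨i, -, rfl⟩ := Finset.mem_image.1 hμ
  have hfilter : Finset.univ.filter (eigval X · = eigval X i) = blockSet X i := by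
    ext k
    simp [mem_blockSet]
  rw [hfilter, hblock, hblock, h]

theorem sum_mul_lambdaDir (hH : H.IsHermitian) {c : Fin n → ℝ}
    (hc : c.FactorsThrough (eigval X)) :
    ∑ k, c k * lambdaDir X U H k = ∑ k, c k * (Uᵀ * H * U) k k :=
  sum_mul_eq_sum_mul_of_blocks hc fun i => by
    simp only [sum_blockSet, lambdaDir_blockEmb, sum_eigval (isHermitian_blockMat X hH i)]
    rfl

theorem sum_mul_lambdaDir_sq (hH : H.IsHermitian) {c : Fin n → ℝ}
    (hc : c.FactorsThrough (eigval X)) :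
    ∑ k, c k * lambdaDir X U H k ^ 2 =
      ∑ k, ∑ l, if eigval X k = eigval X l then c k * (Uᵀ * H * U) k l ^ 2 else 0 := by
  have hblock (k : Fin n) :
      (∑ l, if eigval X k = eigval X l then c k * (Uᵀ * H * U) k l ^ 2 else 0) =
        c k * ∑ l ∈ blockSet X k, (Uᵀ * H * U) k l ^ 2 := by
    simp only [Finset.mul_sum, blockSet, Finset.sum_filter, mul_ite, mul_zero, eq_comm]
  simp only [hblock]
  refine sum_mul_eq_sum_mul_of_blocks hc fun i => ?_
  have hinner : ∑ k ∈ blockSet X i, ∑ l ∈ blockSet X k, (Uᵀ * H * U) k l ^ 2 =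
      ∑ k ∈ blockSet X i, ∑ l ∈ blockSet X i, (Uᵀ * H * U) k l ^ 2 :=
    Finset.sum_congr rfl fun k hk => by rw [blockSet_eq hk]
  rw [hinner]
  simp only [sum_blockSet, lambdaDir_blockEmb, sum_eigval_sq (isHermitian_blockMat X hH i)]
  rfl

end BlockEigenvalues

section QuadraticForm

open Polynomial
open scoped Matrix.Norms.L2Operator

theorem dslope_eq_ite_add (f : ℝ → ℝ) (a b : ℝ) :
    dslope f a b = (if a = b then deriv f a else 0) + (f a * (a - b)⁻¹ + f b * (b - a)⁻¹) := by
  rcases eq_or_ne a b with rfl | h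
  · simp
  · rw [dslope_of_ne f h.symm, slope_def_field, if_neg h, ← neg_sub b a, inv_neg]
    ring

theorem sum_loewner_mul_sq {ι : Type*} [Fintype ι] {K : Matrix ι ι ℝ} (hK : K.IsSymm) (f : ℝ → ℝ)
    (x : ι → ℝ) :
    ∑ i, ∑ j, loewner f x i j * K i j ^ 2 =
      (∑ i, ∑ j, if x i = x j then deriv f (x i) * K i j ^ 2 else 0) +
        2 * ∑ i, ∑ j, f (x i) * (x i - x j)⁻¹ * K i j ^ 2 := by
  have hswap : ∑ i, ∑ j, f (x j) * (x j - x i)⁻¹ * K i j ^ 2 =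
      ∑ i, ∑ j, f (x i) * (x i - x j)⁻¹ * K i j ^ 2 := by
    rw [Finset.sum_comm]
    simp only [hK.apply]
  simp only [loewner, of_apply, dslope_eq_ite_add, add_mul, ite_mul, zero_mul,
    Finset.sum_add_distrib, hswap, two_mul]

variable {n : ℕ} {X : Sym n} {U : Matrix (Fin n) (Fin n) ℝ}

theorem isSymm_transpose_mul_mul (U : Matrix (Fin n) (Fin n) ℝ) (H : Sym n) :
    (Uᵀ * H.val * U).IsSymm :=
  isHermitian_conjTranspose_mul_mul U (isHermitian_coe H)

theorem ipM_symPart_schurMul (U L : Matrix (Fin n) (Fin n) ℝ) (H : Sym n) :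
    ipM (symPart n (schurMul U L H.val)) H = ∑ i, ∑ j, L i j * (Uᵀ * H.val * U) i j ^ 2 := by
  have htrace : (schurMul U L H.val * H.val).trace =
      (L ⊙ (Uᵀ * H.val * U) * (Uᵀ * H.val * U)ᵀ).trace := by
    rw [(isSymm_transpose_mul_mul U H).eq, schurMul_apply, Matrix.mul_assoc, Matrix.mul_assoc,
      trace_mul_comm]
    simp only [Matrix.mul_assoc]
  rw [ipM_symPart, htrace, ← sum_hadamard_eq]
  simp only [hadamard_apply, mul_assoc, sq]

theorem ipV_mulVec_lambdaDir (U : Matrix (Fin n) (Fin n) ℝ) (H : Sym n)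
    {A : Matrix (Fin n) (Fin n) ℝ} (hrow : ∀ k, (A k).FactorsThrough (eigval X.val))
    (hcol : ∀ l, (A.col l).FactorsThrough (eigval X.val)) :
    ipV (A *ᵥ lambdaDir X.val U H.val) (lambdaDir X.val U H.val) =
      ipV (A *ᵥ diagConj U H) (diagConj U H) := by
  have hmul : A *ᵥ lambdaDir X.val U H.val = A *ᵥ diagConj U H :=
    funext fun k => sum_mul_lambdaDir (isHermitian_coe H) (hrow k)
  have hfactors : (A *ᵥ diagConj U H).FactorsThrough (eigval X.val) := fun i j hij =>
    congrArg (· ⬝ᵥ _) (funext fun l => hcol l hij)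
  rw [hmul]
  exact sum_mul_lambdaDir (isHermitian_coe H) hfactors

theorem ipV_diagonal_mulVec_lambdaDir (U : Matrix (Fin n) (Fin n) ℝ) (H : Sym n)
    {b : Fin n → ℝ} (hb : b.FactorsThrough (eigval X.val)) :
    ipV (diagonal b *ᵥ lambdaDir X.val U H.val) (lambdaDir X.val U H.val) =
      ∑ k, ∑ l, if eigval X.val k = eigval X.val l then b k * (Uᵀ * H.val * U) k l ^ 2 else 0 := by
  rw [← sum_mul_lambdaDir_sq (isHermitian_coe H) hb]
  exact Finset.sum_congr rfl fun k _ => by rw [mulVec_diagonal]; ring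

theorem ipM_hessian_apply_self (hU : U ∈ eigOrth X.val) (p : ℝ[X]) {A : Matrix (Fin n) (Fin n) ℝ}
    (hrow : ∀ k, (A k).FactorsThrough (eigval X.val))
    (hcol : ∀ l, (A.col l).FactorsThrough (eigval X.val)) (H : Sym n) :
    ipM (symPart n (schurMul U (loewner p.eval (eigval X.val)) H.val) +
        conjDiag U (A *ᵥ diagConj U H)) H =
      ipV ((diagonal (fun k => p.derivative.eval (eigval X.val k)) + A) *ᵥ
          lambdaDir X.val U H.val) (lambdaDir X.val U H.val) +
        curvTerm X.val U H.val fun k => p.eval (eigval X.val k) := by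
  have hb : (fun k => p.derivative.eval (eigval X.val k)).FactorsThrough (eigval X.val) :=
    fun i j hij => congrArg p.derivative.eval hij
  have haddM (S T : Sym n) : ipM (S + T) H = ipM S H + ipM T H := (ipMBilin n).map_add₂ S T H
  have haddV (u v w : Fin n → ℝ) : ipV (u + v) w = ipV u w + ipV v w :=
    (ipVBilin n).map_add₂ u v w
  rw [haddM, ipM_symPart_schurMul, ipM_conjDiag,
    sum_loewner_mul_sq (isSymm_transpose_mul_mul U H), add_mulVec, haddV,
    ipV_diagonal_mulVec_lambdaDir U H hb, ipV_mulVec_lambdaDir U H hrow hcol,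
    curvTerm_eq hU H.2]
  simp only [Polynomial.deriv]
  ring

end QuadraticForm

section SpectralFunctions

open Polynomial
open scoped Matrix.Norms.L2Operator

variable {n : ℕ} {θ : (Fin n → ℝ) → EReal} {X : Sym n} {U : Matrix (Fin n) (Fin n) ℝ}

theorem specFn_comp_conjDiag (hθ : SymmetricFn θ) (hU : U * Uᵀ = 1) :
    specFn θ ∘ conjDiag U = θ := funext fun z => by
  obtain ⟨σ, hσ⟩ := exists_perm_eigval_conj_diagonal hU z
  exact (congrArg θ hσ).trans (hθ z σ)

theorem twiceDiffAt_of_specFn (hθ : SymmetricFn θ) (h : TwiceDiffAt ipM (specFn θ) X) :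
    TwiceDiffAt ipV θ (eigval X.val) := by
  obtain ⟨G, D, h⟩ := h
  obtain ⟨U, hU⟩ := eigOrth_nonempty (isHermitian_coe X)
  have hadj (S : Sym n) (d : Fin n → ℝ) :
      ipMBilin n S (conjDiag U d) = ipVBilin n (diagConj U S) d := by
    rw [ipMBilin_apply, ipM, trace_mul_comm, ← ipM, ipM_conjDiag]
    exact dotProduct_comm _ _
  rw [← conjDiag_eigval hU] at h
  exact ⟨_, _, specFn_comp_conjDiag hθ hU.1 ▸
    hasSecondDerivAt_comp_clm (isCoercive_ipVBilin n) (isCoercive_ipMBilin n) hadj h⟩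

theorem exists_polynomial_hessian_eq {φ : (Fin n → ℝ) → ℝ} (hφ : SymmetricFn φ) {x : Fin n → ℝ}
    {G : (Fin n → ℝ) → Fin n → ℝ} (hG : ∀ᶠ z in 𝓝 x, HasFDerivAt φ (ipVBilin n (G z)) z)
    {D : (Fin n → ℝ) →L[ℝ] Fin n → ℝ} (hD : HasFDerivAt G D x) :
    ∃ (p : ℝ[X]) (A : Matrix (Fin n) (Fin n) ℝ), (∀ k, p.eval (x k) = G x k) ∧
      (∀ k, (A k).FactorsThrough x) ∧ (∀ l, (A.col l).FactorsThrough x) ∧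
      D = LinearMap.toContinuousLinearMap
        (diagonal (fun k => p.derivative.eval (x k)) + A).mulVecLin := by
  obtain ⟨M, rfl⟩ : ∃ M : Matrix (Fin n) (Fin n) ℝ,
      LinearMap.toContinuousLinearMap M.mulVecLin = D :=
    ⟨LinearMap.toMatrix' D.toLinearMap,
      ContinuousLinearMap.ext fun v => LinearMap.toMatrix'_mulVec D.toLinearMap v⟩
  obtain ⟨b, A, hb, hrow, hcol, rfl⟩ :=
    exists_eq_diagonal_add fun σ hσ => hessian_submatrix_perm hφ hG hD (σ := σ) hσ
  obtain ⟨p, hp⟩ := exists_polynomial_eval_eq_derivative_eval_eq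
    (gradient_factorsThrough hφ hG.self_of_nhds) hb
  exact ⟨p, A, fun k => (hp k).1, hrow, hcol, by simp only [hp]⟩

theorem exists_hasSecondDerivAt_specFn (hθ : SymmetricFn θ) {G D : (Fin n → ℝ) → Fin n → ℝ}
    (h : HasSecondDerivAt ipV θ (eigval X.val) G D) (hU : U ∈ eigOrth X.val) :
    ∃ G' D' : Sym n → Sym n, HasSecondDerivAt ipM (specFn θ) X G' D' ∧
      ∀ H : Sym n, ipM (D' H) H =
        ipV (D (lambdaDir X.val U H.val)) (lambdaDir X.val U H.val) +
          curvTerm X.val U H.val (G (eigval X.val)) := by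
  obtain ⟨hfin, hG, D, rfl, hD⟩ := (hasSecondDerivAt_iff (isCoercive_ipVBilin n)).1 h
  have hφ : SymmetricFn fun z => (θ z).toReal := fun z σ => congrArg EReal.toReal (hθ z σ)
  obtain ⟨p, A, hp, hrow, hcol, rfl⟩ := exists_polynomial_hessian_eq hφ hG hD
  choose V hV using fun Z : Sym n => eigOrth_nonempty (isHermitian_coe Z)
  refine ⟨_, _, (hasSecondDerivAt_iff (isCoercive_ipMBilin n)).2
    ⟨(tendsto_eigval X).eventually hfin, ?_, _, rfl,
      hasFDerivAt_conjDiag_comp_eigval hV hU hp hrow hcol hD⟩, fun H => ?_⟩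
  · filter_upwards [(tendsto_eigval X).eventually hG] with Z hZ
    exact hasFDerivAt_comp_eigval (hV Z) (gradient_factorsThrough hφ hZ) hZ
  · rw [← funext hp]
    exact ipM_hessian_apply_self hU p hrow hcol H

theorem twiceDiffAt_specFn (hθ : SymmetricFn θ) (h : TwiceDiffAt ipV θ (eigval X.val)) :
    TwiceDiffAt ipM (specFn θ) X := by
  obtain ⟨G, D, h⟩ := h
  obtain ⟨U, hU⟩ := eigOrth_nonempty (isHermitian_coe X)
  obtain ⟨G', D', h', -⟩ := exists_hasSecondDerivAt_specFn hθ h hU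
  exact ⟨G', D', h'⟩

theorem ipM_hessian_specFn_apply_self (hθ : SymmetricFn θ) {Gg Dg : Sym n → Sym n}
    (hg : HasSecondDerivAt ipM (specFn θ) X Gg Dg) {G D : (Fin n → ℝ) → Fin n → ℝ}
    (h : HasSecondDerivAt ipV θ (eigval X.val) G D) (hU : U ∈ eigOrth X.val) (H : Sym n) :
    ipM (Dg H) H =
      ipV (D (lambdaDir X.val U H.val)) (lambdaDir X.val U H.val) +
        curvTerm X.val U H.val (G (eigval X.val)) := by
  obtain ⟨G', D', h', hquad⟩ := exists_hasSecondDerivAt_specFn hθ h hU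
  rw [hasSecondDerivAt_unique (isCoercive_ipMBilin n) hg h', hquad]

end SpectralFunctions

theorem twice_diff_spectral_general {n : ℕ} (θ : (Fin n → ℝ) → EReal) (X : Sym n)
    (hsym : SymmetricFn θ) :
    (TwiceDiffAt ipM (specFn θ) X ↔ TwiceDiffAt ipV θ (eigval X.val)) ∧
    (∀ Gg Dg : Sym n → Sym n, HasSecondDerivAt ipM (specFn θ) X Gg Dg →
      ∀ Gt Dt : (Fin n → ℝ) → Fin n → ℝ, HasSecondDerivAt ipV θ (eigval X.val) Gt Dt →
        ∀ U ∈ eigOrth X.val, ∀ H : Sym n,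
          ipM (Dg H) H =
            ipV (Dt (lambdaDir X.val U H.val)) (lambdaDir X.val U H.val)
              + curvTerm X.val U H.val (Gt (eigval X.val))) :=
  ⟨⟨twiceDiffAt_of_specFn hsym, twiceDiffAt_specFn hsym⟩,
    fun _ _ hg _ _ ht _ hU H => ipM_hessian_specFn_apply_self hsym hg ht hU H⟩

/-- Corollary 4.4: for a prox-regular spectral function, twice
differentiability of `g` at `X` is equivalent to twice differentiability of `θ` at `λ(X)`,
together with the formula for the second derivative quadratic form. -/
theorem twice_diff_spectral {n : ℕ} (θ : (Fin n → ℝ) → EReal) (X : Sym n)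
    (hsym : SymmetricFn θ)
    (hpr : ProxRegularAt ipM (specFn θ) X) :
    (TwiceDiffAt ipM (specFn θ) X ↔ TwiceDiffAt ipV θ (eigval X.val)) ∧
    (∀ Gg Dg : Sym n → Sym n, HasSecondDerivAt ipM (specFn θ) X Gg Dg →
      ∀ Gt Dt : (Fin n → ℝ) → Fin n → ℝ, HasSecondDerivAt ipV θ (eigval X.val) Gt Dt →
        ∀ U ∈ eigOrth X.val, ∀ H : Sym n,
          ipM (Dg H) H =
            ipV (Dt (lambdaDir X.val U H.val)) (lambdaDir X.val U H.val)
              + curvTerm X.val U H.val (Gt (eigval X.val))) := by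
  exact twice_diff_spectral_general θ X hsym

end SpecPaper
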